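/- arXiv:1001.0432 — 5 statements merged into one kernel-verified Lean document; each statement's English description precedes it below -/
import Mathlib

section
/- Let G be a finite subgroup of GL_n(ℂ), let S be its set of reflections, and let c : S → ℂ be a conjugation-invariant function. Then the Dunkl operators commute pairwise: for all a, b ∈ ℂ^n one has D_a ∘ D_b = D_b ∘ D_a as ℂ-linear endomorphisms of the field ℂ(x_1,…,x_n) of rational functions. -/
open MvPolynomial

noncomputable section

/-- The matrix underlying an element of a subgroup of `GL_n(ℂ)`. -/
def matOf {n : ℕ} {G : Subgroup (Matrix.GeneralLinearGroup (Fin n) ℂ)} (g : G) :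
    Matrix (Fin n) (Fin n) ℂ :=
  ((g : Matrix.GeneralLinearGroup (Fin n) ℂ) : Matrix (Fin n) (Fin n) ℂ)

/-- The linear polynomial `Σᵢ aᵢ xᵢ` with coefficient vector `a`. -/
def linForm {n : ℕ} (a : Fin n → ℂ) : MvPolynomial (Fin n) ℂ :=
  ∑ i, MvPolynomial.C (a i) * MvPolynomial.X i

/-- The Dunkl operator `D_a` on the field `K = ℂ(x₁,…,xₙ)`:
`D_a f = ∂_a f − Σ_{s ∈ S} (2 c_s α_s(a)/(1 − λ_s)) · (f − s·f)/α_s`,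
assembled from the derivations `pd i` extending `∂/∂xᵢ`, the action `ρ` of `G` on `K`, and
the reflection data `(S, c, λ, α)`. -/
def dunklOp (n : ℕ) (K : Type) [Field K] [Algebra ℂ K]
    [Algebra (MvPolynomial (Fin n) ℂ) K] [IsScalarTower ℂ (MvPolynomial (Fin n) ℂ) K]
    {G : Subgroup (Matrix.GeneralLinearGroup (Fin n) ℂ)}
    (S : Finset G) (c lam : G → ℂ) (α : G → Fin n → ℂ)
    (ρ : G →* (K ≃ₐ[ℂ] K)) (pd : Fin n → Derivation ℂ K K)
    (a : Fin n → ℂ) : K →ₗ[ℂ] K :=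
  (∑ i, a i • (pd i).toLinearMap)
    - ∑ s ∈ S, (2 * c s * (∑ i, α s i * a i) / (1 - lam s)) •
        ((LinearMap.mulLeft ℂ
            ((algebraMap (MvPolynomial (Fin n) ℂ) K (linForm (α s)))⁻¹)).comp
          (LinearMap.id - (ρ s).toLinearMap))

/-!
The elements `z` of the field for which multiplication by `z` commutes with `[D_a, D_b]` form a
subfield. It contains every linear form `x_v`. Indeed, if `s⁻¹` is `y ↦ y - α_s(y) w_s`, then
`[D_b, x_v] = v(b) - ∑ κ_s v(w_s) α_s(b) s`, and equivariance of the Dunkl operators under `s` gives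
`[D_a, s] = -α_s(a) s D_{w_s}`. Hence `[D_a, [D_b, x_v]]` is symmetric in `a` and `b`, and
`[[D_a, D_b], x_v] = 0` by the Jacobi identity. As the linear forms generate the field,
`[D_a, D_b]` is multiplication by `[D_a, D_b] 1`, which vanishes because `D_a 1 = 0`.
-/

section FieldGenerators

variable {k K L : Type*} [Field k] [Field K] [Algebra k K] [Field L] [Algebra k L] {s : Set K}

theorem map_mul_of_adjoin_eq_top (hs : IntermediateField.adjoin k s = ⊤) (T : K →ₗ[k] K)
    (hT : ∀ z ∈ s, ∀ f, T (z * f) = z * T f) (z f : K) : T (z * f) = z * T f := by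
  have hz : z ∈ IntermediateField.adjoin k s := hs ▸ IntermediateField.mem_top
  induction hz using IntermediateField.adjoin_induction generalizing f with
  | mem z hz => exact hT z hz f
  | algebraMap c => simp only [← Algebra.smul_def, map_smul]
  | add z w _ _ hz hw => simp only [add_mul, map_add, hz, hw]
  | mul z w _ _ hz hw => rw [mul_assoc, hz, hw, mul_assoc]
  | inv z _ hz =>
    rcases eq_or_ne z 0 with rfl | hz0
    · simp
    · rw [eq_inv_mul_iff_mul_eq₀ hz0, ← hz, mul_inv_cancel_left₀ hz0]

theorem map_derivation_of_adjoin_eq_top (hs : IntermediateField.adjoin k s = ⊤)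
    (σ : K →ₐ[k] L) (D : Derivation k K K) (D' : Derivation k L L)
    (h : ∀ z ∈ s, σ (D z) = D' (σ z)) (f : K) : σ (D f) = D' (σ f) := by
  have hf : f ∈ IntermediateField.adjoin k s := hs ▸ IntermediateField.mem_top
  induction hf using IntermediateField.adjoin_induction with
  | mem z hz => exact h z hz
  | algebraMap c => simp
  | add z w _ _ hz hw => simp only [map_add, hz, hw]
  | mul z w _ _ hz hw => simp only [Derivation.leibniz, smul_eq_mul, map_add, map_mul, hz, hw]
  | inv z _ hz => simp only [Derivation.leibniz_inv, smul_eq_mul, map_mul, map_neg, map_pow,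
      map_inv₀, hz]

theorem adjoin_range_X_eq_top (k K : Type*) {ι : Type*} [Field k] [Field K] [Algebra k K]
    [Algebra (MvPolynomial ι k) K] [IsScalarTower k (MvPolynomial ι k) K]
    [IsFractionRing (MvPolynomial ι k) K] :
    IntermediateField.adjoin k
      (Set.range fun i ↦ algebraMap (MvPolynomial ι k) K (X i)) = ⊤ := by
  set F := IntermediateField.adjoin k (Set.range fun i ↦ algebraMap (MvPolynomial ι k) K (X i))
  have polynomial_mem (p : MvPolynomial ι k) : algebraMap (MvPolynomial ι k) K p ∈ F := by
    induction p using MvPolynomial.induction_on with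
    | C c =>
      rw [← MvPolynomial.algebraMap_eq, ← IsScalarTower.algebraMap_apply]
      exact F.algebraMap_mem c
    | add p q hp hq => rw [map_add]; exact add_mem hp hq
    | mul_X p i hp =>
      rw [map_mul]
      exact mul_mem hp (IntermediateField.subset_adjoin k _ ⟨i, rfl⟩)
  refine eq_top_iff.mpr fun f _ ↦ ?_
  obtain ⟨p, q, -, rfl⟩ := IsFractionRing.div_surjective (A := MvPolynomial ι k) f
  exact div_mem (polynomial_mem p) (polynomial_mem q)

end FieldGenerators

section Reflections

variable {k E G : Type*} [Field k] [AddCommGroup E] [Module k E] [Group G]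

/-- `T` is a reflection with root `φ`: it differs from the identity by the rank-one map
`y ↦ φ y • w`, for some vector `w ≠ 0`. Transvections are allowed, that is, `φ w` may vanish. -/
def IsReflectionWithRoot (T : Module.End k E) (φ : Module.Dual k E) : Prop :=
  φ ≠ 0 ∧ ∃ w ≠ 0, T = Module.preReflection w φ

namespace IsReflectionWithRoot

theorem exists_eq_smul {T : Module.End k E} {φ ψ : Module.Dual k E}
    (hφ : IsReflectionWithRoot T φ) (hψ : IsReflectionWithRoot T ψ) :
    ∃ m : k, m ≠ 0 ∧ φ = m • ψ := by
  obtain ⟨hφ0, w, hw, rfl⟩ := hφ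
  obtain ⟨-, w', -, h⟩ := hψ
  have rankOne_eq (y : E) : φ y • w = ψ y • w' := by
    simpa only [Module.preReflection_apply, sub_right_inj] using LinearMap.congr_fun h y
  obtain ⟨y, hy⟩ : ∃ y, φ y ≠ 0 := DFunLike.ne_iff.mp hφ0
  have hy' : ψ y ≠ 0 := by
    intro hzero
    simpa [hzero, hy, hw] using rankOne_eq y
  have hw' : w' = (φ y / ψ y) • w := by
    rw [div_eq_inv_mul, mul_smul, rankOne_eq, inv_smul_smul₀ hy']
  refine ⟨φ y / ψ y, div_ne_zero hy hy', LinearMap.ext fun z ↦ smul_left_injective k hw ?_⟩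
  simp only [rankOne_eq, hw', LinearMap.smul_apply, smul_eq_mul, smul_smul, mul_comm]

variable {π : Representation k G E} {s : G} {φ : Module.Dual k E}

theorem conj (h : IsReflectionWithRoot (π s) φ) (g : G) :
    IsReflectionWithRoot (π (g * s * g⁻¹)) (π.dual g φ) := by
  obtain ⟨hφ, w, hw, hs⟩ := h
  refine ⟨(map_ne_zero_iff _ (π.dual.apply_bijective g).injective).mpr hφ, π g w,
    (map_ne_zero_iff _ (π.apply_bijective g).injective).mpr hw, LinearMap.ext fun y ↦ ?_⟩
  simp [hs, Module.preReflection_apply, Module.Dual.transpose_apply]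

theorem inv (h : IsReflectionWithRoot (π s) φ) : IsReflectionWithRoot (π s⁻¹) φ := by
  obtain ⟨hφ, w, hw, hs⟩ := h
  refine ⟨hφ, -π s⁻¹ w,
    neg_ne_zero.mpr ((map_ne_zero_iff _ (π.apply_bijective s⁻¹).injective).mpr hw),
    LinearMap.ext fun y ↦ ?_⟩
  have apply_inv : y = π s⁻¹ y - φ y • π s⁻¹ w := by
    simpa [Module.preReflection_apply] using congrArg (π s⁻¹) (LinearMap.congr_fun hs y)
  rw [Module.preReflection_apply, smul_neg, sub_neg_eq_add, ← sub_eq_iff_eq_add, ← apply_inv]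

theorem eigenvalue_conj {ψ : Module.Dual k E} {g : G} {l l' : k}
    (hs : IsReflectionWithRoot (π s) φ) (ht : IsReflectionWithRoot (π (g * s * g⁻¹)) ψ)
    (hφ : π.dual s φ = l • φ) (hψ : π.dual (g * s * g⁻¹) ψ = l' • ψ) : l' = l := by
  obtain ⟨m, hm, hgφ⟩ := (hs.conj g).exists_eq_smul ht
  have dual_conj : π.dual (g * s * g⁻¹) (π.dual g φ) = l • π.dual g φ := by
    rw [← Module.End.mul_apply, ← map_mul, inv_mul_cancel_right, map_mul, Module.End.mul_apply,
      hφ, map_smul]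
  rw [hgφ, map_smul, hψ, smul_comm l] at dual_conj
  exact smul_left_injective k ht.1 (smul_right_injective _ hm dual_conj)

end IsReflectionWithRoot

theorem isReflectionWithRoot_of_finrank_range_eq_one {π : Representation k G E} {s : G}
    {φ : Module.Dual k E} {l : k} (hs : Module.finrank k (LinearMap.range (1 - π s)) = 1)
    (hφ : φ ≠ 0) (hl : l ≠ 1) (hsφ : π.dual s φ = l • φ) : IsReflectionWithRoot (π s) φ := by
  obtain ⟨⟨w, hwmem⟩, hw, span_w⟩ := finrank_eq_one_iff'.mp hs
  have displacement (y : E) : ∃ c : k, c • w = y - π s y := by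
    obtain ⟨c, hc⟩ := span_w ⟨(1 - π s) y, LinearMap.mem_range_self _ y⟩
    exact ⟨c, congrArg Subtype.val hc⟩
  choose c hc using displacement
  have eigen (y : E) : φ y = l * φ (π s y) := by
    simpa [Module.Dual.transpose_apply] using LinearMap.congr_fun hsφ (π s y)
  have coeff (y : E) : c y * (l * φ w) = (l - 1) * φ y := by
    have apply_displacement := congrArg φ (hc y)
    simp only [map_smul, map_sub, smul_eq_mul] at apply_displacement
    linear_combination l * apply_displacement + eigen y
  obtain ⟨y, hy⟩ : ∃ y, φ y ≠ 0 := DFunLike.ne_iff.mp hφ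
  have hlw : l * φ w ≠ 0 := by
    intro hzero
    simpa [hzero, hy, sub_eq_zero, hl] using coeff y
  refine ⟨hφ, ((l - 1) / (l * φ w)) • w,
    smul_ne_zero (div_ne_zero (sub_ne_zero.mpr hl) hlw) fun hw0 ↦ hw (Subtype.ext hw0),
    LinearMap.ext fun y ↦ ?_⟩
  rw [Module.preReflection_apply, smul_smul, mul_div_assoc', mul_comm (φ y), ← coeff,
    mul_div_cancel_right₀ _ hlw, hc, sub_sub_cancel]

end Reflections

section CommutationRelations

variable {k K ι E : Type*} [CommRing k] [Ring K] [Algebra k K]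

/- `D a (D b (z * f))` is `z * D a (D b f)` plus terms symmetric in `a` and `b`. -/
theorem commutator_mul {S : Finset ι} {D : E → Module.End k K} {z : K} {v : E → k} {c : ι → k}
    {α : ι → E → k} {σ : ι → K →ₗ[k] K} {w : ι → E}
    (hz : ∀ a f, D a (z * f) = z * D a f + v a • f - ∑ s ∈ S, (c s * α s a) • σ s f)
    (hσ : ∀ s ∈ S, ∀ a f, D a (σ s f) = σ s (D a f) - α s a • σ s (D (w s) f)) (a b : E) (f : K) :
    (D a * D b - D b * D a) (z * f) = z * (D a * D b - D b * D a) f := by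
  have second_order (a b : E) : D a (D b (z * f)) =
      z * D a (D b f) + (v a • D b f + v b • D a f) -
        ∑ s ∈ S, c s • (α s a • σ s (D b f) + α s b • σ s (D a f) -
          (α s a * α s b) • σ s (D (w s) f)) := by
    have sum_eq : ∑ s ∈ S, c s • (α s a • σ s (D b f) + α s b • σ s (D a f) -
          (α s a * α s b) • σ s (D (w s) f)) =
        ∑ s ∈ S, (c s * α s a) • σ s (D b f) + ∑ s ∈ S, (c s * α s b) • D a (σ s f) := by
      rw [← Finset.sum_add_distrib]
      refine Finset.sum_congr rfl fun s hs ↦ ?_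
      rw [hσ s hs]
      module
    simp only [hz, map_sub, map_add, map_sum, map_smul, sum_eq]
    abel
  simp only [LinearMap.sub_apply, Module.End.mul_apply]
  rw [second_order a b, second_order b a, mul_sub]
  simp only [add_comm (α _ b • _), mul_comm (α _ b)]
  abel

end CommutationRelations

section DunklOperators

variable {k E G K : Type*} [Field k] [AddCommGroup E] [Module k E] [Group G] [Field K] [Algebra k K]

/-- The divided difference `f ↦ (f - σ f) / z` attached to an endomorphism `σ` and `z : K`. -/
def dividedDifference (z : K) (σ : K →ₗ[k] K) : K →ₗ[k] K :=
  LinearMap.mulLeft k z⁻¹ ∘ₗ (LinearMap.id - σ)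

theorem dividedDifference_apply (z : K) (σ : K →ₗ[k] K) (f : K) :
    dividedDifference z σ f = z⁻¹ * (f - σ f) := rfl

theorem dividedDifference_mul {z y : K} (hz : z ≠ 0) {σ : K ≃ₐ[k] K} {c : k}
    (hy : σ y = y - c • z) (f : K) :
    dividedDifference z σ.toLinearMap (y * f) =
      y * dividedDifference z σ.toLinearMap f + c • σ f := by
  simp only [dividedDifference_apply, AlgEquiv.toLinearMap_apply, map_mul, hy, Algebra.smul_def]
  field_simp
  ring

theorem map_dividedDifference (z : K) (σ τ : K ≃ₐ[k] K) (f : K) :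
    σ (dividedDifference z τ.toLinearMap f) =
      dividedDifference (σ z) (σ * τ * σ⁻¹).toLinearMap (σ f) := by
  simp [dividedDifference_apply, ← AlgEquiv.mul_apply]

theorem dividedDifference_smul (m : k) (z : K) (σ : K →ₗ[k] K) (f : K) :
    dividedDifference (m • z) σ f = m⁻¹ • dividedDifference z σ f := by
  simp [dividedDifference_apply, smul_inv₀]

/-- The Dunkl operators `D_a f = ∂_a f - ∑ s ∈ S, κ_s α_s(a) (f - s f) / α_s`, linear in `a`. The
map `x` realises linear forms on `E` as elements of `K`, `pd a` is the derivative along `a`, and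
the group `G` acts on `K` through `ρ`. The weight `κ_s` is `2 c_s / (1 - λ_s)` in the classical
notation. -/
def dunklOperator (x : Module.Dual k E →ₗ[k] K) (pd : E →ₗ[k] Derivation k K K)
    (ρ : G →* (K ≃ₐ[k] K)) (S : Finset G) (κ : G → k) (α : G → Module.Dual k E) :
    E →ₗ[k] Module.End k K where
  toFun a := pd a - ∑ s ∈ S, (κ s * α s a) • dividedDifference (x (α s)) (ρ s).toLinearMap
  map_add' a b := by
    simp only [map_add, Derivation.coe_add_linearMap, mul_add, add_smul, Finset.sum_add_distrib]
    abel
  map_smul' r a := by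
    simp only [map_smul, Derivation.coe_smul_linearMap, smul_sub, Finset.smul_sum, smul_smul,
      smul_eq_mul, mul_left_comm, RingHom.id_apply]

variable {x : Module.Dual k E →ₗ[k] K} {pd : E →ₗ[k] Derivation k K K}
  {ρ : G →* (K ≃ₐ[k] K)} {S : Finset G} {κ : G → k} {α : G → Module.Dual k E}
  {π : Representation k G E} {w : G → E}

theorem dunklOperator_apply (a : E) (f : K) :
    dunklOperator x pd ρ S κ α a f = pd a f -
      ∑ s ∈ S, (κ s * α s a) • dividedDifference (x (α s)) (ρ s).toLinearMap f := by
  simp [dunklOperator, LinearMap.sum_apply]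

theorem coord_ne_zero (hpd : ∀ a v, pd a (x v) = algebraMap k K (v a)) {v : Module.Dual k E}
    (hv : v ≠ 0) : x v ≠ 0 := by
  obtain ⟨a, ha⟩ : ∃ a, v a ≠ 0 := DFunLike.ne_iff.mp hv
  intro hzero
  exact ha (by simpa [hzero] using (hpd a v).symm)

theorem dunklOperator_one (a : E) : dunklOperator x pd ρ S κ α a 1 = 0 := by
  simp [dunklOperator_apply, dividedDifference_apply]

theorem dunklOperator_coord_mul (hpd : ∀ a v, pd a (x v) = algebraMap k K (v a))
    (hρ : ∀ g v, ρ g (x v) = x (π.dual g v)) (hα : ∀ s ∈ S, α s ≠ 0)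
    (hw : ∀ s ∈ S, π s⁻¹ = Module.preReflection (w s) (α s)) (a : E) (v : Module.Dual k E)
    (f : K) :
    dunklOperator x pd ρ S κ α a (x v * f) = x v * dunklOperator x pd ρ S κ α a f + v a • f -
      ∑ s ∈ S, (κ s * v (w s) * α s a) • ρ s f := by
  have map_coord (s : G) (hs : s ∈ S) : ρ s (x v) = x v - v (w s) • x (α s) := by
    rw [hρ, ← map_smul, ← map_sub]
    congr 1
    ext y
    simp [hw s hs, Module.Dual.transpose_apply, Module.preReflection_apply, mul_comm]
  have sum_dividedDifference :
      ∑ s ∈ S, (κ s * α s a) • dividedDifference (x (α s)) (ρ s).toLinearMap (x v * f) =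
        x v * ∑ s ∈ S, (κ s * α s a) • dividedDifference (x (α s)) (ρ s).toLinearMap f +
          ∑ s ∈ S, (κ s * v (w s) * α s a) • ρ s f := by
    rw [Finset.mul_sum, ← Finset.sum_add_distrib]
    refine Finset.sum_congr rfl fun s hs ↦ ?_
    rw [dividedDifference_mul (coord_ne_zero hpd (hα s hs)) (map_coord s hs), smul_add,
      mul_smul_comm, smul_smul, mul_right_comm]
  rw [dunklOperator_apply, dunklOperator_apply, sum_dividedDifference, Derivation.leibniz, hpd,
    Algebra.smul_def (v a)]
  simp only [smul_eq_mul]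
  ring

theorem map_pd (hx : IntermediateField.adjoin k (Set.range x) = ⊤)
    (hpd : ∀ a v, pd a (x v) = algebraMap k K (v a))
    (hρ : ∀ g v, ρ g (x v) = x (π.dual g v)) (g : G) (a : E) (f : K) :
    ρ g (pd (π g⁻¹ a) f) = pd a (ρ g f) := by
  refine map_derivation_of_adjoin_eq_top hx (ρ g : K →ₐ[k] K) _ _ ?_ f
  rintro _ ⟨v, rfl⟩
  simp [hpd, hρ, Module.Dual.transpose_apply]

theorem map_smul_dividedDifference (hρ : ∀ g v, ρ g (x v) = x (π.dual g v)) {φ ψ : Module.Dual k E}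
    {s g : G} (hs : IsReflectionWithRoot (π s) φ)
    (hgs : IsReflectionWithRoot (π (g * s * g⁻¹)) ψ) (a : E) (f : K) :
    ρ g (φ (π g⁻¹ a) • dividedDifference (x φ) (ρ s).toLinearMap f) =
      ψ a • dividedDifference (x ψ) (ρ (g * s * g⁻¹)).toLinearMap (ρ g f) := by
  obtain ⟨m, hm, hφ⟩ := (hs.conj g).exists_eq_smul hgs
  have root_apply : φ (π g⁻¹ a) = m * ψ a := LinearMap.congr_fun hφ a
  rw [root_apply, map_smul, map_dividedDifference, hρ, hφ, map_smul, dividedDifference_smul,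
    smul_smul, mul_right_comm, mul_inv_cancel₀ hm, one_mul, map_mul, map_mul, map_inv]

theorem map_dunklOperator (hx : IntermediateField.adjoin k (Set.range x) = ⊤)
    (hpd : ∀ a v, pd a (x v) = algebraMap k K (v a))
    (hρ : ∀ g v, ρ g (x v) = x (π.dual g v)) (hS : ∀ g, ∀ s ∈ S, g * s * g⁻¹ ∈ S)
    (hα : ∀ s ∈ S, IsReflectionWithRoot (π s) (α s))
    (hκ : ∀ g, ∀ s ∈ S, κ (g * s * g⁻¹) = κ s) (g : G) (a : E) (f : K) :
    ρ g (dunklOperator x pd ρ S κ α (π g⁻¹ a) f) = dunklOperator x pd ρ S κ α a (ρ g f) := by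
  rw [dunklOperator_apply, dunklOperator_apply, map_sub, map_pd hx hpd hρ, map_sum]
  congr 1
  refine Finset.sum_nbij' (fun s ↦ g * s * g⁻¹) (fun t ↦ g⁻¹ * t * g) (hS g)
    (fun t ht ↦ by simpa using hS g⁻¹ t ht) (fun s _ ↦ by group) (fun t _ ↦ by group) ?_
  intro s hs
  rw [mul_smul, map_smul, map_smul_dividedDifference hρ (hα s hs) (hα _ (hS g s hs)), hκ g s hs,
    mul_smul]

theorem apply_map_of_equivariant {D : E →ₗ[k] Module.End k K}
    (hD : ∀ g a f, ρ g (D (π g⁻¹ a) f) = D a (ρ g f)) {s : G} {φ : Module.Dual k E} {y : E}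
    (hs : π s⁻¹ = Module.preReflection y φ) (a : E) (f : K) :
    D a (ρ s f) = ρ s (D a f) - φ a • ρ s (D y f) := by
  simp only [← hD, hs, Module.preReflection_apply, map_sub, map_smul, LinearMap.sub_apply,
    LinearMap.smul_apply]

theorem dunkl_operators_commute_general {x : Module.Dual k E →ₗ[k] K}
    {pd : E →ₗ[k] Derivation k K K} {ρ : G →* (K ≃ₐ[k] K)} {π : Representation k G E}
    (hx : IntermediateField.adjoin k (Set.range x) = ⊤)
    (hpd : ∀ a v, pd a (x v) = algebraMap k K (v a))
    (hρ : ∀ g v, ρ g (x v) = x (π.dual g v))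
    {S : Finset G} (hS : ∀ g, ∀ s ∈ S, g * s * g⁻¹ ∈ S)
    {α : G → Module.Dual k E} (hα : ∀ s ∈ S, IsReflectionWithRoot (π s) (α s))
    {κ : G → k} (hκ : ∀ g, ∀ s ∈ S, κ (g * s * g⁻¹) = κ s) (a b : E) :
    Commute (dunklOperator x pd ρ S κ α a) (dunklOperator x pd ρ S κ α b) := by
  choose! w _ hw using fun s hs ↦ (hα s hs).inv.2
  set D := dunklOperator x pd ρ S κ α
  have commutator_coord_mul (v : Module.Dual k E) (f : K) :
      (D a * D b - D b * D a) (x v * f) = x v * (D a * D b - D b * D a) f :=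
    commutator_mul (D := D) (v := v) (α := fun s ↦ α s) (σ := fun s ↦ (ρ s).toLinearMap) (w := w)
      (dunklOperator_coord_mul hpd hρ (fun s hs ↦ (hα s hs).1) hw · v)
      (fun s hs ↦ apply_map_of_equivariant (map_dunklOperator hx hpd hρ hS hα hκ) (hw s hs)) a b f
  refine sub_eq_zero.mp (LinearMap.ext fun f ↦ ?_)
  have commutator_one : (D a * D b - D b * D a) 1 = 0 := by simp [D, dunklOperator_one]
  rw [← mul_one f, map_mul_of_adjoin_eq_top hx _ (Set.forall_mem_range.mpr commutator_coord_mul),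
    commutator_one, mul_zero, LinearMap.zero_apply]

end DunklOperators
section MatrixGroups

variable {k ι K : Type*} [Field k] [Fintype ι] [Field K] [Algebra k K]

theorem linearCombination_derivation_apply (pd : ι → Derivation k K K) (a : ι → k) (f : K) :
    Fintype.linearCombination k pd a f = ∑ i, a i • pd i f := by
  rw [Fintype.linearCombination_apply, ← Derivation.coeFnAddMonoidHom_apply, map_sum,
    Finset.sum_apply]
  rfl

variable [DecidableEq ι] {G : Subgroup (Matrix.GeneralLinearGroup ι k)} {ξ : ι → K}

theorem rank_one_sub_conj (g s : Matrix.GeneralLinearGroup ι k) :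
    (1 - (g * s * g⁻¹ : Matrix.GeneralLinearGroup ι k) : Matrix ι ι k).rank =
      (1 - s : Matrix ι ι k).rank := by
  have conj_eq : (1 - (g * s * g⁻¹ : Matrix.GeneralLinearGroup ι k) : Matrix ι ι k) =
      g * (1 - s) * (g⁻¹ : Matrix.GeneralLinearGroup ι k) := by
    simp [mul_sub, sub_mul]
  rw [conj_eq, Matrix.rank_mul_eq_left_of_isUnit_det, Matrix.rank_mul_eq_right_of_isUnit_det]
  all_goals exact (Matrix.isUnit_iff_isUnit_det _).mp (Units.isUnit _)

/-- The representation of a matrix group on column vectors. -/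
def standardRep (G : Subgroup (Matrix.GeneralLinearGroup ι k)) : Representation k G (ι → k) :=
  (Matrix.toLinAlgEquiv' : Matrix ι ι k ≃ₐ[k] _).toMonoidHom.comp
    ((Units.coeHom (Matrix ι ι k)).comp G.subtype)

theorem finrank_range_one_sub_standardRep (g : G) :
    Module.finrank k (LinearMap.range (1 - standardRep G g)) =
      (1 - (g : Matrix.GeneralLinearGroup ι k) : Matrix ι ι k).rank := by
  have one_sub_eq : 1 - standardRep G g =
      (1 - (g : Matrix.GeneralLinearGroup ι k) : Matrix ι ι k).mulVecLin := by
    ext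
    simp [standardRep]
  rw [one_sub_eq, Matrix.rank]

theorem standardRep_dual_dotProductEquiv (g : G) (u : ι → k) :
    (standardRep G).dual g (dotProductEquiv k ι u) =
      dotProductEquiv k ι (Matrix.vecMul u ((g⁻¹ : G) : Matrix.GeneralLinearGroup ι k)) := by
  refine LinearMap.ext fun y ↦ ?_
  exact Matrix.dotProduct_mulVec u _ y

theorem isReflectionWithRoot_standardRep {s : G} {u : ι → k} {l : k}
    (hs : (1 - (s : Matrix.GeneralLinearGroup ι k) : Matrix ι ι k).rank = 1) (hu : u ≠ 0)
    (hl : l ≠ 1)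
    (hsu : (standardRep G).dual s (dotProductEquiv k ι u) = l • dotProductEquiv k ι u) :
    IsReflectionWithRoot (standardRep G s) (dotProductEquiv k ι u) :=
  isReflectionWithRoot_of_finrank_range_eq_one ((finrank_range_one_sub_standardRep s).trans hs)
    ((dotProductEquiv k ι).map_ne_zero_iff.mpr hu) hl hsu

/-- The linear map on the dual of `ι → k` sending the `i`-th coordinate function to `ξ i`. -/
def coordMap (k : Type*) [Field k] [Algebra k K] (ξ : ι → K) : Module.Dual k (ι → k) →ₗ[k] K :=
  Fintype.linearCombination k ξ ∘ₗ (dotProductEquiv k ι).symm.toLinearMap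

theorem coordMap_dotProductEquiv (u : ι → k) :
    coordMap k ξ (dotProductEquiv k ι u) = ∑ i, u i • ξ i := by
  simp [coordMap, Fintype.linearCombination_apply]

theorem adjoin_range_coordMap (hξ : IntermediateField.adjoin k (Set.range ξ) = ⊤) :
    IntermediateField.adjoin k (Set.range (coordMap k ξ)) = ⊤ := by
  refine top_le_iff.mp (hξ.ge.trans (IntermediateField.adjoin.mono k _ _ ?_))
  rintro _ ⟨i, rfl⟩
  exact ⟨dotProductEquiv k ι (Pi.single i 1), by
    simp [coordMap_dotProductEquiv, Pi.single_apply]⟩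

theorem linearCombination_derivation_coordMap {pd : ι → Derivation k K K}
    (hpd : ∀ i j, pd i (ξ j) = (Pi.single j 1 : ι → K) i) (a : ι → k) (v : Module.Dual k (ι → k)) :
    Fintype.linearCombination k pd a (coordMap k ξ v) = algebraMap k K (v a) := by
  obtain ⟨u, rfl⟩ := (dotProductEquiv k ι).surjective v
  simp [coordMap_dotProductEquiv, linearCombination_derivation_apply, hpd, Pi.single_apply,
    dotProduct, Algebra.smul_def, mul_comm]

theorem algEquiv_coordMap {σ : K ≃ₐ[k] K} {g : G}
    (hσ : ∀ i, σ (ξ i) = ∑ j, ((g⁻¹ : G) : Matrix.GeneralLinearGroup ι k) i j • ξ j)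
    (v : Module.Dual k (ι → k)) : σ (coordMap k ξ v) = coordMap k ξ ((standardRep G).dual g v) := by
  obtain ⟨u, rfl⟩ := (dotProductEquiv k ι).surjective v
  simp only [standardRep_dual_dotProductEquiv, coordMap_dotProductEquiv, map_sum, map_smul, hσ,
    Finset.smul_sum, smul_smul, Matrix.vecMul, dotProduct, Finset.sum_smul]
  exact Finset.sum_comm

theorem commute_dunklOperator_of_matrixGroup
    (hξ : IntermediateField.adjoin k (Set.range ξ) = ⊤) {S : Finset G}
    (hS : ∀ s : G, s ∈ S ↔
      (1 - (s : Matrix.GeneralLinearGroup ι k) : Matrix ι ι k).rank = 1)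
    {c lam : G → k} {α : G → ι → k} (hc : ∀ g s : G, s ∈ S → c (g * s * g⁻¹) = c s)
    (hlam : ∀ s ∈ S, lam s ≠ 1) (hα : ∀ s ∈ S, α s ≠ 0)
    (heig : ∀ s ∈ S,
      Matrix.vecMul (α s) ((s⁻¹ : G) : Matrix.GeneralLinearGroup ι k) = lam s • α s)
    {ρ : G →* (K ≃ₐ[k] K)}
    (hρ : ∀ g i, ρ g (ξ i) = ∑ j, ((g⁻¹ : G) : Matrix.GeneralLinearGroup ι k) i j • ξ j)
    {pd : ι → Derivation k K K} (hpd : ∀ i j, pd i (ξ j) = (Pi.single j 1 : ι → K) i)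
    (a b : ι → k) :
    let D := dunklOperator (coordMap k ξ) (Fintype.linearCombination k pd) ρ S
      (fun s ↦ 2 * c s / (1 - lam s)) (fun s ↦ dotProductEquiv k ι (α s))
    Commute (D a) (D b) := by
  have eigenvector (s : G) (hs : s ∈ S) : (standardRep G).dual s (dotProductEquiv k ι (α s)) =
      lam s • dotProductEquiv k ι (α s) := by
    rw [standardRep_dual_dotProductEquiv, heig s hs, map_smul]
  have isReflection (s : G) (hs : s ∈ S) :
      IsReflectionWithRoot (standardRep G s) (dotProductEquiv k ι (α s)) :=
    isReflectionWithRoot_standardRep ((hS s).mp hs) (hα s hs) (hlam s hs) (eigenvector s hs)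
  have conj_mem (g s : G) (hs : s ∈ S) : g * s * g⁻¹ ∈ S :=
    (hS _).mpr ((rank_one_sub_conj (g : Matrix.GeneralLinearGroup ι k) s).trans ((hS s).mp hs))
  have lam_conj (g s : G) (hs : s ∈ S) : lam (g * s * g⁻¹) = lam s :=
    have hgs := conj_mem g s hs
    (isReflection s hs).eigenvalue_conj (isReflection _ hgs) (eigenvector s hs) (eigenvector _ hgs)
  have weight_conj (g s : G) (hs : s ∈ S) :
      2 * c (g * s * g⁻¹) / (1 - lam (g * s * g⁻¹)) = 2 * c s / (1 - lam s) := by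
    rw [hc g s hs, lam_conj g s hs]
  exact dunkl_operators_commute_general (π := standardRep G) (adjoin_range_coordMap hξ)
    (linearCombination_derivation_coordMap hpd) (fun g ↦ algEquiv_coordMap (hρ g)) conj_mem
    isReflection weight_conj a b

end MatrixGroups

section RationalFunctions

variable {n : ℕ} {K : Type} [Field K] [Algebra ℂ K] [Algebra (MvPolynomial (Fin n) ℂ) K]
  [IsScalarTower ℂ (MvPolynomial (Fin n) ℂ) K]
  {G : Subgroup (Matrix.GeneralLinearGroup (Fin n) ℂ)}

/-- The coordinate functions `x₁, …, xₙ` in the field of rational functions. -/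
def coordFn (n : ℕ) (K : Type) [Field K] [Algebra (MvPolynomial (Fin n) ℂ) K] (i : Fin n) : K :=
  algebraMap (MvPolynomial (Fin n) ℂ) K (X i)

theorem algebraMap_linForm (u : Fin n → ℂ) :
    algebraMap (MvPolynomial (Fin n) ℂ) K (linForm u) = ∑ i, u i • coordFn n K i := by
  simp only [linForm, coordFn, map_sum, map_mul, Algebra.smul_def,
    IsScalarTower.algebraMap_apply ℂ (MvPolynomial (Fin n) ℂ) K, MvPolynomial.algebraMap_eq]

theorem dunklOp_eq_dunklOperator (S : Finset G) (c lam : G → ℂ) (α : G → Fin n → ℂ)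
    (ρ : G →* (K ≃ₐ[ℂ] K)) (pd : Fin n → Derivation ℂ K K) (a : Fin n → ℂ) :
    dunklOp n K S c lam α ρ pd a =
      dunklOperator (coordMap ℂ (coordFn n K)) (Fintype.linearCombination ℂ pd) ρ S
        (fun s ↦ 2 * c s / (1 - lam s)) (fun s ↦ dotProductEquiv ℂ (Fin n) (α s)) a := by
  ext f
  simp [dunklOp, dunklOperator_apply, linearCombination_derivation_apply, LinearMap.sum_apply,
    dividedDifference_apply, coordMap_dotProductEquiv, algebraMap_linForm, dotProduct,
    div_mul_eq_mul_div]

end RationalFunctions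

/-- **Dunkl's theorem: Dunkl operators commute.**  Let `G ⊆ GL_n(ℂ)` be a finite subgroup,
`S` its set of reflections (elements with `rank(1 − s) = 1`), and for each `s ∈ S` let
`α_s ∈ (ℂⁿ)*` be a nonzero eigenvector of `s` (acting on covectors by `α ↦ α ∘ s⁻¹`) with
eigenvalue `λ_s ≠ 1`.  Let `c : S → ℂ` be conjugation-invariant.  Let `K = ℂ(x₁,…,xₙ)` be
the field of rational functions (a fraction field of `ℂ[x₁,…,xₙ]`), with `G` acting by
`(g·f)(x) = f(g⁻¹x)` (the action `ρ` determined on the variables) and `pd i` the partial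
derivatives (the derivations extending `pderiv i`).  Then for all `a, b ∈ ℂⁿ`,
`D_a ∘ D_b = D_b ∘ D_a` as `ℂ`-linear endomorphisms of `K`. -/
theorem dunkl_operators_commute (n : ℕ) (hn : 1 ≤ n)
    (K : Type) [Field K] [Algebra ℂ K]
    [Algebra (MvPolynomial (Fin n) ℂ) K] [IsScalarTower ℂ (MvPolynomial (Fin n) ℂ) K]
    [IsFractionRing (MvPolynomial (Fin n) ℂ) K]
    (G : Subgroup (Matrix.GeneralLinearGroup (Fin n) ℂ)) [Finite G]
    (S : Finset G)
    (hS : ∀ s : G, s ∈ S ↔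
      Matrix.rank ((1 : Matrix (Fin n) (Fin n) ℂ) - matOf s) = 1)
    (c lam : G → ℂ) (α : G → Fin n → ℂ)
    (hc : ∀ (g s : G), s ∈ S → c (g * s * g⁻¹) = c s)
    (hlam : ∀ s ∈ S, lam s ≠ 1)
    (hα : ∀ s ∈ S, α s ≠ 0)
    (heig : ∀ s ∈ S, Matrix.vecMul (α s) (matOf s⁻¹) = lam s • α s)
    (ρ : G →* (K ≃ₐ[ℂ] K))
    (hρ : ∀ (g : G) (i : Fin n),
      ρ g (algebraMap (MvPolynomial (Fin n) ℂ) K (MvPolynomial.X i)) =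
        algebraMap (MvPolynomial (Fin n) ℂ) K
          (∑ j, MvPolynomial.C (matOf g⁻¹ i j) * MvPolynomial.X j))
    (pd : Fin n → Derivation ℂ K K)
    (hpd : ∀ (i : Fin n) (q : MvPolynomial (Fin n) ℂ),
      pd i (algebraMap (MvPolynomial (Fin n) ℂ) K q)
        = algebraMap (MvPolynomial (Fin n) ℂ) K (MvPolynomial.pderiv i q)) :
    ∀ a b : Fin n → ℂ,
      (dunklOp n K S c lam α ρ pd a).comp (dunklOp n K S c lam α ρ pd b)
        = (dunklOp n K S c lam α ρ pd b).comp (dunklOp n K S c lam α ρ pd a) := by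
  intro a b
  rw [dunklOp_eq_dunklOperator, dunklOp_eq_dunklOperator]
  exact commute_dunklOperator_of_matrixGroup (adjoin_range_X_eq_top ℂ K) hS hc hlam hα heig
    (fun g i ↦ (hρ g i).trans (algebraMap_linForm _))
    (fun i j ↦ by simp [hpd, pderiv_X, Pi.single_apply, eq_comm]) a b

end
end

section
/- (PBW theorem for rational Cherednik algebras, in the faithful Dunkl representation.) Let G be a finite subgroup of GL_n(ℂ), S its set of reflections, c : S → ℂ conjugation-invariant. Let y_1,…,y_n be a basis of ℂ^n and x_1,…,x_n the dual basis of (ℂ^n)*. Then the family of ℂ-linear endomorphisms of ℂ(x_1,…,x_n) given by ρ(g) ∘ D_{y_1}^{m_1} ∘ ⋯ ∘ D_{y_n}^{m_n} ∘ M_{x_1}^{k_1} ∘ ⋯ ∘ M_{x_n}^{k_n}, indexed by g ∈ G and (m_1,…,m_n), (k_1,…,k_n) ∈ ℕ^n, is linearly independent over ℂ (here ρ(g) is the action of g on rational functions and M_{x_i} is multiplication by x_i; the Dunkl operators commute, so the product is well defined). -/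
open MvPolynomial

noncomputable section

/-- Multiplication by the linear form with coefficient vector `ξ`. -/
def mulLinForm (n : ℕ) (K : Type) [Field K] [Algebra ℂ K]
    [Algebra (MvPolynomial (Fin n) ℂ) K] [IsScalarTower ℂ (MvPolynomial (Fin n) ℂ) K]
    (ξ : Fin n → ℂ) : K →ₗ[ℂ] K :=
  LinearMap.mulLeft ℂ (algebraMap (MvPolynomial (Fin n) ℂ) K (linForm ξ))

/-!
An operator `Q` on `K` lies in `twistedDiffOp σ d` when `d` successive twisted commutators
`Q ↦ Q ∘ h - σ(h) ∘ Q` annihilate it. Elements of these spaces are simultaneous generalized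
eigenvectors, with eigenvalues `σ(h)`, of the commuting operators `Q ↦ Q ∘ h`; hence the spaces for
different `σ` are independent. A Dunkl operator differs from the directional derivative `∂_y` by a
combination of multiplications and automorphisms, and these preserve the order, so an ordered
monomial of degree `d` in the Dunkl operators agrees with the same monomial in the `∂_y` modulo
operators of lower order. In a linear relation the terms of highest degree therefore separate
according to the group element, and repeated commutators with the dual coordinates `x_i` kill their
coefficients, which are polynomials in the `x_i`; these coordinates are algebraically independent.
-/

section

open Algebra (lmul)

/-- The ordered monomial `B₁^{m₁} ⋯ Bₙ^{mₙ}` in elements of a monoid that need not commute. -/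
def ordMonomial {E : Type*} [Monoid E] {n : ℕ} (B : Fin n → E) (m : Fin n → ℕ) : E :=
  (List.ofFn fun i => B i ^ m i).prod

section OrdMonomial

variable {E : Type*}

lemma ordMonomial_zero [Monoid E] {n : ℕ} (B : Fin n → E) : ordMonomial B 0 = 1 := by
  simp [ordMonomial]

lemma ordMonomial_succ [Monoid E] {n : ℕ} (B : Fin (n + 1) → E) (m : Fin (n + 1) → ℕ) :
    ordMonomial B m = B 0 ^ m 0 * ordMonomial (Fin.tail B) (Fin.tail m) := by
  simp [ordMonomial, Fin.tail]

lemma map_ordMonomial {F : Type*} [Monoid E] [Monoid F] (φ : E →* F) {n : ℕ} (B : Fin n → E)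
    (m : Fin n → ℕ) : φ (ordMonomial B m) = ordMonomial (φ ∘ B) m := by
  simp [ordMonomial, map_list_prod, List.map_ofFn, Function.comp_def]

lemma ordMonomial_eq_prod [CommMonoid E] {n : ℕ} (x : Fin n → E) (m : Fin n → ℕ) :
    ordMonomial x m = ∏ i, x i ^ m i :=
  List.prod_ofFn

lemma ordMonomial_induction₂ {F : Type*} [Monoid E] [Monoid F] {n : ℕ} {D : Fin n → E}
    {B : Fin n → F} {r : ℕ → E → F → Prop} (one : r 0 1 1)
    (mul : ∀ i d P Q, r d P Q → r (d + 1) (D i * P) (B i * Q)) (m : Fin n → ℕ) :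
    r (∑ i, m i) (ordMonomial D m) (ordMonomial B m) := by
  have word_induction (l : List (Fin n)) : r l.length (l.map D).prod (l.map B).prod := by
    induction l with
    | nil => simpa using one
    | cons i l ih => simpa using mul i _ _ _ ih
  simpa [ordMonomial, List.map_flatten, List.prod_flatten, List.length_flatten, List.map_ofFn,
    List.sum_ofFn, Function.comp_def] using
    word_induction (List.ofFn fun i => List.replicate (m i) i).flatten

variable [Ring E]

lemma mul_lie_eq (a b z : E) : ⁅a * b, z⁆ = a * ⁅b, z⁆ + ⁅a, z⁆ * b := by
  simp only [Ring.lie_def]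
  noncomm_ring

lemma pow_lie_of_lie_eq_one {b z : E} (h : ⁅b, z⁆ = 1) (k : ℕ) :
    ⁅b ^ k, z⁆ = k • b ^ (k - 1) := by
  induction k with
  | zero => simp [Ring.lie_def]
  | succ k ih =>
    rw [pow_succ', mul_lie_eq, ih, h, one_mul, mul_smul_comm, Nat.add_sub_cancel, succ_nsmul]
    rcases k with _ | k
    · simp
    · rw [Nat.add_sub_cancel, ← pow_succ']

lemma ordMonomial_lie_eq_zero {n : ℕ} {B : Fin n → E} {z : E} (h : ∀ j, ⁅B j, z⁆ = 0)
    (m : Fin n → ℕ) : ⁅ordMonomial B m, z⁆ = 0 := by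
  refine (Commute.list_prod_left _ _ fun P hP => ?_).lie_eq
  obtain ⟨j, rfl⟩ := (List.mem_ofFn' _ _).1 hP
  exact Commute.pow_left (commute_iff_lie_eq.2 (h j)) _

lemma ordMonomial_lie {n : ℕ} {B : Fin n → E} {z : E} (i : Fin n)
    (h : ∀ j, ⁅B j, z⁆ = if i = j then 1 else 0) (m : Fin n → ℕ) :
    ⁅ordMonomial B m, z⁆ = m i • ordMonomial B (m - Pi.single i 1) := by
  induction n with
  | zero => exact i.elim0
  | succ n ih =>
    rw [ordMonomial_succ, ordMonomial_succ B, mul_lie_eq]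
    cases i using Fin.cases with
    | zero =>
      have tail_comm (j : Fin n) : ⁅Fin.tail B j, z⁆ = 0 := by
        rw [Fin.tail, h, if_neg (Fin.succ_ne_zero j).symm]
      have tail_sub : Fin.tail (m - Pi.single 0 1) = Fin.tail m := by
        ext j; simp [Fin.tail]
      rw [ordMonomial_lie_eq_zero tail_comm, pow_lie_of_lie_eq_one (by simp [h]), tail_sub]
      simp [mul_assoc]
    | succ i =>
      have head_comm : Commute (B 0) z := commute_iff_lie_eq.2 (by simp [h])
      have tail_sub : Fin.tail (m - Pi.single i.succ 1) = Fin.tail m - Pi.single i 1 := by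
        ext j; simp [Fin.tail, Pi.single_apply]
      have head_sub : (m - Pi.single i.succ 1 : Fin (n + 1) → ℕ) 0 = m 0 := by simp
      rw [(head_comm.pow_left _).lie_eq, ih i (fun j => by simp [Fin.tail, h]), tail_sub, head_sub,
        zero_mul, add_zero, mul_smul_comm, Fin.tail]

end OrdMonomial

section Filtration

variable {R ι M V : Type*} [Ring R] [AddCommGroup M] [Module R M] [AddCommGroup V] [Module R V]

lemma finsupp_eq_zero_of_filtration {S : Type*} [Ring S] [Module S V] (W : ℕ → Submodule S V)
    (hW : Monotone W) (deg : ι → ℕ) (T : ι → M →ₗ[R] V) (hT : ∀ i a, T i a ∈ W (deg i + 1))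
    (hgr : ∀ d (N : ι →₀ M), (∀ i ∈ N.support, deg i = d) →
      (N.sum fun i a => T i a) ∈ W d → N = 0)
    (N : ι →₀ M) (hN : (N.sum fun i a => T i a) = 0) : N = 0 := by
  classical
  by_contra hne
  obtain ⟨i, hi, hmax⟩ := N.support.exists_max_image deg (Finsupp.support_nonempty_iff.2 hne)
  set top := N.filter fun j => deg j = deg i
  set low := N.filter fun j => ¬ deg j = deg i
  have sum_split : (top.sum fun j a => T j a) + (low.sum fun j a => T j a) = 0 := by
    rw [← Finsupp.sum_add_index' (fun j => map_zero (T j)) (fun j => map_add (T j)),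
      Finsupp.filter_add_filter_not, hN]
  have low_mem : (low.sum fun j a => T j a) ∈ W (deg i) := by
    refine Submodule.sum_mem _ fun j hj => hW ?_ (hT j _)
    rw [Finsupp.support_filter, Finset.mem_filter] at hj
    exact lt_of_le_of_ne (hmax j hj.1) hj.2
  have top_eq_zero : top = 0 := by
    refine hgr (deg i) top (fun j hj => ?_) ?_
    · rw [Finsupp.support_filter, Finset.mem_filter] at hj
      exact hj.2
    · rw [eq_neg_of_add_eq_zero_left sum_split]
      exact neg_mem low_mem
  have top_apply : top i = N i := Finsupp.filter_apply_pos _ _ rfl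
  exact Finsupp.mem_support_iff.1 hi (by rw [← top_apply, top_eq_zero, Finsupp.zero_apply])

lemma linearIndependent_prod_of_finsupp_sum_eq_zero {κ : Type*} (T : ι → M →ₗ[R] V)
    (hT : ∀ N : ι →₀ M, (N.sum fun i a => T i a) = 0 → N = 0) {f : κ → M}
    (hf : LinearIndependent R f) : LinearIndependent R fun p : ι × κ => T p.1 (f p.2) := by
  have single_indep := Finsupp.linearIndependent_single (fun _ : ι => f) fun _ => hf
  have ker_eq_bot : LinearMap.ker (Finsupp.lsum ℕ T) = ⊥ := LinearMap.ker_eq_bot'.2 hT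
  have := (single_indep.map' _ ker_eq_bot).comp _ (Equiv.sigmaEquivProd ι κ).symm.injective
  simpa [Function.comp_def] using this

end Filtration

section TwistedDifferentialOperators

variable {R A : Type*} [CommRing R] [CommRing A] [Algebra R A]

/-- Differential operators of order `< d` on `A`, twisted by an algebra endomorphism `σ`: the
operators annihilated by any `d` successive twisted commutators `Q ↦ Q ∘ h - σ(h) ∘ Q`, `h ∈ A`.
For `σ = id` these are Grothendieck's differential operators. -/
def twistedDiffOp (σ : A →ₐ[R] A) : ℕ → Submodule A (Module.End R A)
  | 0 => ⊥
  | d + 1 => ⨅ h : A, (twistedDiffOp σ d).comap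
      (LinearMap.mulRight A (lmul R A h) - algebraMap A (Module.End A (Module.End R A)) (σ h))

variable {σ : A →ₐ[R] A} {d : ℕ} {Q : Module.End R A}

lemma mem_twistedDiffOp_zero : Q ∈ twistedDiffOp σ 0 ↔ Q = 0 := Submodule.mem_bot A

lemma mem_twistedDiffOp_succ :
    Q ∈ twistedDiffOp σ (d + 1) ↔ ∀ h, Q * lmul R A h - σ h • Q ∈ twistedDiffOp σ d := by
  simp [twistedDiffOp]

lemma twistedDiffOp_mono (σ : A →ₐ[R] A) : Monotone (twistedDiffOp σ) := by
  refine monotone_nat_of_le_succ fun d => ?_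
  induction d with
  | zero => exact bot_le
  | succ d ih =>
    exact fun Q hQ => mem_twistedDiffOp_succ.2 fun h => ih <| mem_twistedDiffOp_succ.1 hQ h

lemma one_mem_twistedDiffOp_id : (1 : Module.End R A) ∈ twistedDiffOp (AlgHom.id R A) 1 :=
  mem_twistedDiffOp_succ.2 fun h => mem_twistedDiffOp_zero.2 <| by ext; simp

lemma mul_lmul_mem_twistedDiffOp (hQ : Q ∈ twistedDiffOp σ d) (a : A) :
    Q * lmul R A a ∈ twistedDiffOp σ d := by
  induction d generalizing Q with
  | zero => simp_all [mem_twistedDiffOp_zero]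
  | succ d ih =>
    refine mem_twistedDiffOp_succ.2 fun h => ?_
    have := ih (mem_twistedDiffOp_succ.1 hQ h)
    rwa [sub_mul, mul_assoc, ← map_mul, mul_comm h, map_mul, ← mul_assoc, smul_mul_assoc] at this

lemma toLinearMap_mul_lmul (σ : A →ₐ[R] A) (a : A) :
    σ.toLinearMap * lmul R A a = σ a • σ.toLinearMap := by
  ext; simp

lemma toLinearMap_mul_smul (σ : A →ₐ[R] A) (a : A) (Q : Module.End R A) :
    σ.toLinearMap * (a • Q) = σ a • (σ.toLinearMap * Q) := by
  ext; simp

lemma toLinearMap_mul_mem_twistedDiffOp (τ : A →ₐ[R] A) (hQ : Q ∈ twistedDiffOp σ d) :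
    τ.toLinearMap * Q ∈ twistedDiffOp (τ.comp σ) d := by
  induction d generalizing Q with
  | zero => simp_all [mem_twistedDiffOp_zero]
  | succ d ih =>
    refine mem_twistedDiffOp_succ.2 fun h => ?_
    have := ih (mem_twistedDiffOp_succ.1 hQ h)
    rwa [mul_sub, toLinearMap_mul_smul, ← mul_assoc] at this

lemma derivation_mul_smul (δ : Derivation R A A) (a : A) (Q : Module.End R A) :
    δ.toLinearMap * (a • Q) = a • (δ.toLinearMap * Q) + δ a • Q := by
  ext; simp [mul_comm]

lemma derivation_mul_mem_twistedDiffOp (δ : Derivation R A A) (hQ : Q ∈ twistedDiffOp σ d) :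
    δ.toLinearMap * Q ∈ twistedDiffOp σ (d + 1) := by
  induction d generalizing Q with
  | zero => simp_all [mem_twistedDiffOp_zero]
  | succ d ih =>
    refine mem_twistedDiffOp_succ.2 fun h => ?_
    have commutator : δ.toLinearMap * Q * lmul R A h - σ h • (δ.toLinearMap * Q)
        = δ.toLinearMap * (Q * lmul R A h - σ h • Q) + δ (σ h) • Q := by
      rw [mul_sub, derivation_mul_smul, mul_assoc]
      abel
    rw [commutator]
    exact add_mem (ih (mem_twistedDiffOp_succ.1 hQ h)) (Submodule.smul_mem _ _ hQ)

lemma twistedDiffOp_le_iInf_maxGenEigenspace (σ : A →ₐ[R] A) (d : ℕ) :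
    twistedDiffOp σ d ≤
      ⨅ h, Module.End.maxGenEigenspace (LinearMap.mulRight A (lmul R A h)) (σ h) := by
  intro Q hQ
  refine (Module.End.mem_iInf_maxGenEigenspace_iff _ _ _).2 fun h => ⟨d, ?_⟩
  induction d generalizing Q with
  | zero => simpa [mem_twistedDiffOp_zero] using hQ
  | succ d ih =>
    rw [pow_succ]
    exact ih (by simpa using mem_twistedDiffOp_succ.1 hQ h)

lemma iSupIndep_iInf_maxGenEigenspace_mulRight [IsDomain A] :
    iSupIndep fun σ : A →ₐ[R] A =>
      ⨅ h, Module.End.maxGenEigenspace (LinearMap.mulRight A (lmul R A h)) (σ h) := by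
  refine (Module.End.independent_iInf_maxGenEigenspace_of_forall_mapsTo _ fun h k φ =>
    Module.End.mapsTo_maxGenEigenspace_of_comm ?_ φ).comp DFunLike.coe_injective
  refine LinearMap.ext fun Q => ?_
  simp only [Module.End.mul_apply, LinearMap.mulRight_apply]
  rw [mul_assoc, mul_assoc, ← map_mul, ← map_mul, mul_comm]

/-- The span of the operators of order `< d` twisted by arbitrary algebra endomorphisms. -/
def allTwistedDiffOp (R A : Type*) [CommRing R] [CommRing A] [Algebra R A] (d : ℕ) :
    Submodule A (Module.End R A) :=
  ⨆ σ : A →ₐ[R] A, twistedDiffOp σ d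

lemma twistedDiffOp_le_all (σ : A →ₐ[R] A) (d : ℕ) : twistedDiffOp σ d ≤ allTwistedDiffOp R A d :=
  le_iSup (fun σ => twistedDiffOp σ d) σ

lemma allTwistedDiffOp_mono : Monotone (allTwistedDiffOp R A) := fun _ _ hde =>
  iSup_mono fun σ => twistedDiffOp_mono σ hde

lemma mem_allTwistedDiffOp_of_forall {e : ℕ} (L : Module.End R A →+ Module.End R A)
    (hL : ∀ σ, ∀ Q ∈ twistedDiffOp σ d, L Q ∈ allTwistedDiffOp R A e)
    (hQ : Q ∈ allTwistedDiffOp R A d) : L Q ∈ allTwistedDiffOp R A e := by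
  induction hQ using Submodule.iSup_induction' with
  | mem σ Q hQ => exact hL σ Q hQ
  | zero => simp
  | add P Q _ _ hP hQ => simpa using add_mem hP hQ

lemma mem_twistedDiffOp_of_sum_mem [IsDomain A] {s : Finset (A →ₐ[R] A)}
    {x : (A →ₐ[R] A) → Module.End R A} {d e : ℕ} (hx : ∀ σ ∈ s, x σ ∈ twistedDiffOp σ e)
    (hsum : ∑ σ ∈ s, x σ ∈ allTwistedDiffOp R A d) : ∀ σ ∈ s, x σ ∈ twistedDiffOp σ d := by
  classical
  obtain ⟨y, hy, hsum_eq⟩ := (Submodule.mem_iSup_iff_exists_finsupp _ _).1 hsum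
  have agree : ∀ σ ∈ s ∪ y.support, s.piecewise x 0 σ = y σ := by
    refine (iSupIndep_iff_finsetSum_eq_imp_eq _).1 iSupIndep_iInf_maxGenEigenspace_mulRight _ _ _
      (fun σ _ => ⟨?_, twistedDiffOp_le_iInf_maxGenEigenspace σ d (hy σ)⟩) ?_
    · by_cases hσ : σ ∈ s
      · simpa [hσ] using twistedDiffOp_le_iInf_maxGenEigenspace σ e (hx σ hσ)
      · simp [hσ]
    · rw [Finset.sum_piecewise, Finset.union_inter_cancel_left, hsum_eq.symm, Finsupp.sum]
      simpa using Finset.sum_subset Finset.subset_union_right (by simp)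
  intro σ hσ
  have := agree σ (Finset.mem_union_left _ hσ)
  rw [Finset.piecewise_eq_of_mem _ _ _ hσ] at this
  exact this ▸ hy σ

lemma toLinearMap_mul_mem_allTwistedDiffOp (τ : A →ₐ[R] A) (hQ : Q ∈ allTwistedDiffOp R A d) :
    τ.toLinearMap * Q ∈ allTwistedDiffOp R A d :=
  mem_allTwistedDiffOp_of_forall (AddMonoidHom.mulLeft τ.toLinearMap)
    (fun _ _ hP => twistedDiffOp_le_all _ d (toLinearMap_mul_mem_twistedDiffOp τ hP)) hQ

lemma mul_lmul_mem_allTwistedDiffOp (hQ : Q ∈ allTwistedDiffOp R A d) (a : A) :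
    Q * lmul R A a ∈ allTwistedDiffOp R A d :=
  mem_allTwistedDiffOp_of_forall (AddMonoidHom.mulRight (lmul R A a))
    (fun σ _ hP => twistedDiffOp_le_all σ d (mul_lmul_mem_twistedDiffOp hP a)) hQ

lemma derivation_mul_mem_allTwistedDiffOp (δ : Derivation R A A)
    (hQ : Q ∈ allTwistedDiffOp R A d) : δ.toLinearMap * Q ∈ allTwistedDiffOp R A (d + 1) :=
  mem_allTwistedDiffOp_of_forall (AddMonoidHom.mulLeft δ.toLinearMap)
    (fun σ _ hP => twistedDiffOp_le_all σ _ (derivation_mul_mem_twistedDiffOp δ hP)) hQ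

end TwistedDifferentialOperators

section CrossedProduct

variable {R A : Type*} [CommRing R] [CommRing A] [Algebra R A] {d : ℕ}

/-- The algebra of operators on `A` generated by multiplications and algebra endomorphisms. It
contains the difference between a Dunkl operator and the corresponding derivation. -/
def crossedProduct (R A : Type*) [CommRing R] [CommRing A] [Algebra R A] :
    Subalgebra R (Module.End R A) :=
  Algebra.adjoin R (Set.range (lmul R A) ∪ Set.range AlgHom.toLinearMap)

lemma lmul_mem_crossedProduct (a : A) : lmul R A a ∈ crossedProduct R A :=
  Algebra.subset_adjoin (Or.inl ⟨a, rfl⟩)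

lemma toLinearMap_mem_crossedProduct (σ : A →ₐ[R] A) : σ.toLinearMap ∈ crossedProduct R A :=
  Algebra.subset_adjoin (Or.inr ⟨σ, rfl⟩)

lemma mul_mem_allTwistedDiffOp {C P : Module.End R A} (hC : C ∈ crossedProduct R A)
    (hP : P ∈ allTwistedDiffOp R A d) : C * P ∈ allTwistedDiffOp R A d := by
  have lmul_mul_mem (a : A) {P} (hP : P ∈ allTwistedDiffOp R A d) :
      lmul R A a * P ∈ allTwistedDiffOp R A d := Submodule.smul_mem _ a hP
  induction hC using Algebra.adjoin_induction generalizing P with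
  | mem C hC =>
    obtain ⟨a, rfl⟩ | ⟨τ, rfl⟩ := hC
    exacts [lmul_mul_mem a hP, toLinearMap_mul_mem_allTwistedDiffOp τ hP]
  | algebraMap r =>
    rw [← AlgHom.commutes (lmul R A)]
    exact lmul_mul_mem _ hP
  | add C C' _ _ hC hC' => exact add_mul C C' P ▸ add_mem (hC hP) (hC' hP)
  | mul C C' _ _ hC hC' => exact mul_assoc C C' P ▸ hC (hC' hP)

lemma mul_mem_allTwistedDiffOp_succ {T P : Module.End R A} {δ : Derivation R A A}
    (hT : T - δ.toLinearMap ∈ crossedProduct R A) (hP : P ∈ allTwistedDiffOp R A d) :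
    T * P ∈ allTwistedDiffOp R A (d + 1) := by
  rw [← sub_add_cancel T δ.toLinearMap, add_mul]
  exact add_mem (allTwistedDiffOp_mono d.le_succ (mul_mem_allTwistedDiffOp hT hP))
    (derivation_mul_mem_allTwistedDiffOp δ hP)

variable {n : ℕ} {D : Fin n → Module.End R A} {δ : Fin n → Derivation R A A}

lemma ordMonomial_derivation_mem_twistedDiffOp (δ : Fin n → Derivation R A A) (m : Fin n → ℕ) :
    ordMonomial (fun i => (δ i).toLinearMap) m ∈ twistedDiffOp (AlgHom.id R A) (∑ i, m i + 1) :=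
  ordMonomial_induction₂ (B := fun i => (δ i).toLinearMap)
    (r := fun d P _ => P ∈ twistedDiffOp (AlgHom.id R A) (d + 1)) one_mem_twistedDiffOp_id
    (fun i _ _ _ hP => derivation_mul_mem_twistedDiffOp (δ i) hP) m

lemma ordMonomial_mem_allTwistedDiffOp
    (hD : ∀ i, D i - (δ i).toLinearMap ∈ crossedProduct R A) (m : Fin n → ℕ) :
    ordMonomial D m ∈ allTwistedDiffOp R A (∑ i, m i + 1) :=
  ordMonomial_induction₂ (B := D) (r := fun d P _ => P ∈ allTwistedDiffOp R A (d + 1))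
    (twistedDiffOp_le_all _ _ one_mem_twistedDiffOp_id)
    (fun i _ _ _ hP => mul_mem_allTwistedDiffOp_succ (hD i) hP) m

lemma ordMonomial_sub_mem_allTwistedDiffOp
    (hD : ∀ i, D i - (δ i).toLinearMap ∈ crossedProduct R A) (m : Fin n → ℕ) :
    ordMonomial D m - ordMonomial (fun i => (δ i).toLinearMap) m
      ∈ allTwistedDiffOp R A (∑ i, m i) := by
  refine (ordMonomial_induction₂ (r := fun d P Q =>
    P ∈ allTwistedDiffOp R A (d + 1) ∧ P - Q ∈ allTwistedDiffOp R A d)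
    ⟨twistedDiffOp_le_all _ _ one_mem_twistedDiffOp_id, by simp⟩
    (fun i d P Q ⟨hP, hPQ⟩ => ⟨mul_mem_allTwistedDiffOp_succ (hD i) hP, ?_⟩) m).2
  have split : D i * P - (δ i).toLinearMap * Q
      = (D i - (δ i).toLinearMap) * P + (δ i).toLinearMap * (P - Q) := by
    rw [sub_mul, mul_sub, sub_add_sub_cancel]
  rw [split]
  exact add_mem (mul_mem_allTwistedDiffOp (hD i) hP) (derivation_mul_mem_allTwistedDiffOp _ hPQ)

end CrossedProduct

section Symbol

variable {R A : Type*} [CommRing R] [CommRing A] [Algebra R A] {n : ℕ}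

lemma derivation_lie_lmul (δ : Derivation R A A) (a : A) :
    ⁅δ.toLinearMap, lmul R A a⁆ = lmul R A (δ a) := by
  ext; simp [Ring.lie_def, mul_comm]

lemma twisted_commutator_eq (σ : A →ₐ[R] A) (P : Module.End R A) (a h : A) :
    σ.toLinearMap * P * lmul R A a * lmul R A h - σ h • (σ.toLinearMap * P * lmul R A a)
      = σ.toLinearMap * ⁅P, lmul R A h⁆ * lmul R A a := by
  have lmul_comm : lmul R A a * lmul R A h = lmul R A h * lmul R A a := by
    rw [← map_mul, mul_comm, map_mul]
  have smul_eq : σ h • (σ.toLinearMap * P * lmul R A a)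
      = σ.toLinearMap * lmul R A h * P * lmul R A a := by
    rw [toLinearMap_mul_lmul, smul_mul_assoc, smul_mul_assoc]
  rw [smul_eq, Ring.lie_def, mul_assoc _ (lmul R A a), lmul_comm]
  simp only [mul_sub, sub_mul, mul_assoc]

lemma derivation_ordMonomial_lie_lmul {δ : Fin n → Derivation R A A} {i : Fin n} {x : A}
    (hx : ∀ j, δ j x = if i = j then 1 else 0) (m : Fin n → ℕ) :
    ⁅ordMonomial (fun j => (δ j).toLinearMap) m, lmul R A x⁆
      = m i • ordMonomial (fun j => (δ j).toLinearMap) (m - Pi.single i 1) :=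
  ordMonomial_lie i (fun j => by rw [derivation_lie_lmul, hx, apply_ite (lmul R A), map_one,
    map_zero]) m

lemma sub_single_add_single {m : Fin n → ℕ} {i : Fin n} (hi : m i ≠ 0) :
    m - Pi.single i 1 + Pi.single i 1 = m := by
  ext j
  rcases eq_or_ne j i with rfl | hj
  · simpa using Nat.succ_pred_eq_of_ne_zero hi
  · simp [hj]

lemma sum_preimage_mem_twistedDiffOp {σ : A →ₐ[R] A} {δ : Fin n → Derivation R A A} {i : Fin n}
    {x : A} (hx : ∀ j, δ j x = if i = j then 1 else 0) {d : ℕ} {s : Finset (Fin n → ℕ)}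
    (N : (Fin n → ℕ) → A)
    (hN : ∑ m ∈ s, σ.toLinearMap * ordMonomial (fun j => (δ j).toLinearMap) m * lmul R A (N m)
      ∈ twistedDiffOp σ (d + 1)) :
    ∑ m ∈ s.preimage (· + Pi.single i 1) (add_left_injective _).injOn,
      σ.toLinearMap * ordMonomial (fun j => (δ j).toLinearMap) m
        * lmul R A ((m i + 1) • N (m + Pi.single i 1)) ∈ twistedDiffOp σ d := by
  have commutator_mem := mem_twistedDiffOp_succ.1 hN x
  simp only [Finset.sum_mul, Finset.smul_sum, ← Finset.sum_sub_distrib, twisted_commutator_eq,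
    derivation_ordMonomial_lie_lmul hx] at commutator_mem
  rw [← Finset.sum_preimage (· + Pi.single i 1) s (add_left_injective (Pi.single i 1)).injOn _ ?_]
    at commutator_mem
  · simpa only [Pi.add_apply, Pi.single_eq_same, add_tsub_cancel_right, mul_smul_comm,
      smul_mul_assoc, map_nsmul] using commutator_mem
  · intro m _ hm
    have : m i = 0 := by
      by_contra hi
      exact hm ⟨m - Pi.single i 1, sub_single_add_single hi⟩
    rw [this, zero_smul, mul_zero, zero_mul]

lemma eq_zero_of_sum_mem_twistedDiffOp [IsDomain A] [CharZero A] {σ : A →ₐ[R] A}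
    (hσ : Function.Injective σ) {δ : Fin n → Derivation R A A} {x : Fin n → A}
    (hx : ∀ i j, δ j (x i) = if i = j then 1 else 0) {d : ℕ} {s : Finset (Fin n → ℕ)}
    (hs : ∀ m ∈ s, ∑ i, m i = d) (N : (Fin n → ℕ) → A)
    (hN : ∑ m ∈ s, σ.toLinearMap * ordMonomial (fun j => (δ j).toLinearMap) m * lmul R A (N m)
      ∈ twistedDiffOp σ d) :
    ∀ m ∈ s, N m = 0 := by
  induction d generalizing s N with
  | zero =>
    intro m hm
    have eq_zero : ∀ m ∈ s, m = 0 := fun m hm => by simpa [funext_iff] using hs m hm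
    obtain rfl : s = {0} := Finset.eq_singleton_iff_nonempty_unique_mem.2 ⟨⟨m, hm⟩, eq_zero⟩
    rw [Finset.sum_singleton, ordMonomial_zero, mul_one, mem_twistedDiffOp_zero] at hN
    rw [eq_zero m hm]
    exact (map_eq_zero_iff σ hσ).1 (by simpa using LinearMap.congr_fun hN 1)
  | succ d ih =>
    intro m hm
    obtain ⟨i, hi⟩ : ∃ i, m i ≠ 0 := by
      by_contra! h
      simpa [h] using hs m hm
    have smul_N_eq_zero := ih (fun k hk => ?_) _ (sum_preimage_mem_twistedDiffOp (hx i) N hN)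
      (m - Pi.single i 1) (by simpa [sub_single_add_single hi] using hm)
    · rw [sub_single_add_single hi] at smul_N_eq_zero
      exact (smul_eq_zero.1 smul_N_eq_zero).resolve_left (Nat.succ_ne_zero _)
    · have := hs _ (Finset.mem_preimage.1 hk)
      simpa [Finset.sum_add_distrib] using this

end Symbol

/-- The linear map sending `a` to the operator of multiplication by `a` followed by `P`. -/
def mulLmul {R A : Type*} [CommRing R] [CommRing A] [Algebra R A] (P : Module.End R A) :
    A →ₗ[R] Module.End R A :=
  LinearMap.mulLeft R P ∘ₗ (lmul R A).toLinearMap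

section Field

variable {R K : Type*} [CommRing R] [Field K] [CharZero K] [Algebra R K] {n : ℕ}

lemma finsupp_eq_zero_of_sum_mem_allTwistedDiffOp {δ : Fin n → Derivation R K K} {x : Fin n → K}
    (hx : ∀ i j, δ j (x i) = if i = j then 1 else 0) {d : ℕ}
    (N : (K →ₐ[R] K) × (Fin n → ℕ) →₀ K) (hdeg : ∀ p ∈ N.support, ∑ i, p.2 i = d)
    (hN : (N.sum fun p a => p.1.toLinearMap * ordMonomial (fun j => (δ j).toLinearMap) p.2
      * lmul R K a) ∈ allTwistedDiffOp R K d) : N = 0 := by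
  have curry_deg (σ : K →ₐ[R] K) (m : Fin n → ℕ) (hm : m ∈ (N.curry σ).support) :
      ∑ i, m i = d := hdeg (σ, m) (by simpa using hm)
  have component_mem := mem_twistedDiffOp_of_sum_mem (s := N.curry.support) (e := d + 1)
    (x := fun σ => (N.curry σ).sum fun m a =>
      σ.toLinearMap * ordMonomial (fun j => (δ j).toLinearMap) m * lmul R K a)
    (fun σ _ => Submodule.sum_mem _ fun m hm => curry_deg σ m hm ▸ mul_lmul_mem_twistedDiffOp
      (toLinearMap_mul_mem_twistedDiffOp σ (ordMonomial_derivation_mem_twistedDiffOp δ m)) _)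
    (by rwa [← Finsupp.sum_curry_index N (fun σ m a =>
      σ.toLinearMap * ordMonomial (fun j => (δ j).toLinearMap) m * lmul R K a)] at hN)
  ext ⟨σ, m⟩
  by_contra hne
  have apply_ne_zero : N.curry σ m ≠ 0 := hne
  have hσ : σ ∈ N.curry.support := Finsupp.mem_support_iff.2 fun h => apply_ne_zero (by simp [h])
  exact apply_ne_zero <| eq_zero_of_sum_mem_twistedDiffOp σ.injective hx (curry_deg σ) (N.curry σ)
    (component_mem σ hσ) m (Finsupp.mem_support_iff.2 apply_ne_zero)

theorem linearIndependent_toLinearMap_mul_ordMonomial_mul_lmul {κ : Type*} {f : κ → K}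
    (hf : LinearIndependent R f) {δ : Fin n → Derivation R K K} {x : Fin n → K}
    (hx : ∀ i j, δ j (x i) = if i = j then 1 else 0) {D : Fin n → Module.End R K}
    (hD : ∀ i, D i - (δ i).toLinearMap ∈ crossedProduct R K) :
    LinearIndependent R fun p : ((K →ₐ[R] K) × (Fin n → ℕ)) × κ =>
      p.1.1.toLinearMap * ordMonomial D p.1.2 * lmul R K (f p.2) := by
  have congr_mem (p : (K →ₐ[R] K) × (Fin n → ℕ)) (a : K) :
      p.1.toLinearMap * ordMonomial D p.2 * lmul R K a
        - p.1.toLinearMap * ordMonomial (fun j => (δ j).toLinearMap) p.2 * lmul R K a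
        ∈ allTwistedDiffOp R K (∑ i, p.2 i) := by
    rw [← sub_mul, ← mul_sub]
    exact mul_lmul_mem_allTwistedDiffOp (toLinearMap_mul_mem_allTwistedDiffOp p.1
      (ordMonomial_sub_mem_allTwistedDiffOp hD p.2)) a
  refine linearIndependent_prod_of_finsupp_sum_eq_zero
    (fun p : (K →ₐ[R] K) × (Fin n → ℕ) => mulLmul (p.1.toLinearMap * ordMonomial D p.2))
    (finsupp_eq_zero_of_filtration (allTwistedDiffOp R K) allTwistedDiffOp_mono
      (fun p => ∑ i, p.2 i) _ (fun p a => ?_) fun d N hdeg hN => ?_) hf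
  · exact mul_lmul_mem_allTwistedDiffOp (toLinearMap_mul_mem_allTwistedDiffOp p.1
      (ordMonomial_mem_allTwistedDiffOp hD p.2)) a
  · refine finsupp_eq_zero_of_sum_mem_allTwistedDiffOp hx N hdeg ?_
    refine (Submodule.sub_mem_iff_right _ hN).1 ?_
    rw [Finsupp.sum, Finsupp.sum, ← Finset.sum_sub_distrib]
    exact Submodule.sum_mem _ fun p hp => hdeg p hp ▸ congr_mem p (N p)

end Field

lemma toLinearMap_sum_smul_derivation {R A ι : Type*} [CommRing R] [CommRing A] [Algebra R A]
    (s : Finset ι) (a : ι → R) (δ : ι → Derivation R A A) :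
    (∑ j ∈ s, a j • δ j).toLinearMap = ∑ j ∈ s, a j • (δ j).toLinearMap := by
  ext f
  rw [Derivation.coeFn_coe]
  exact (congrFun (map_sum Derivation.coeFnAddMonoidHom (fun j => a j • δ j) s) f).trans (by simp)

lemma linearIndependent_monomials_of_algebraicIndependent {R B ι : Type*} [CommRing R]
    [CommRing B] [Algebra R B] [Fintype ι] {x : ι → B} (hx : AlgebraicIndependent R x) :
    LinearIndependent R fun k : ι → ℕ => ∏ i, x i ^ k i := by
  have := ((basisMonomials ι R).linearIndependent.map' (aeval x).toLinearMap
    (LinearMap.ker_eq_bot.2 hx)).comp _ Finsupp.equivFunOnFinite.symm.injective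
  simpa [Function.comp_def, aeval_monomial, Finsupp.prod_fintype] using this

section DunklRepresentation

variable {n : ℕ} {K : Type} [Field K] [Algebra ℂ K] [Algebra (MvPolynomial (Fin n) ℂ) K]

lemma matOf_injective {G : Subgroup (Matrix.GeneralLinearGroup (Fin n) ℂ)} :
    Function.Injective (matOf : G → Matrix (Fin n) (Fin n) ℂ) :=
  Units.val_injective.comp Subtype.val_injective

lemma linForm_injective : Function.Injective (linForm : (Fin n → ℂ) → MvPolynomial (Fin n) ℂ) := by
  intro a b hab
  ext j
  simpa [linForm, coeff_sum, coeff_C_mul, coeff_X, Finsupp.single_left_inj] using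
    congrArg (coeff (Finsupp.single j 1)) hab

lemma injective_of_apply_X_eq [IsFractionRing (MvPolynomial (Fin n) ℂ) K]
    {G : Subgroup (Matrix.GeneralLinearGroup (Fin n) ℂ)} {ρ : G →* (K ≃ₐ[ℂ] K)}
    (hρ : ∀ (g : G) (i : Fin n),
      ρ g (algebraMap (MvPolynomial (Fin n) ℂ) K (X i)) =
        algebraMap (MvPolynomial (Fin n) ℂ) K (∑ j, C (matOf g⁻¹ i j) * X j)) :
    Function.Injective ρ := by
  intro g g' hgg'
  have row_eq (i : Fin n) : matOf g⁻¹ i = matOf g'⁻¹ i :=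
    linForm_injective <| IsFractionRing.injective (MvPolynomial (Fin n) ℂ) K <|
      (hρ g i).symm.trans <| hgg' ▸ hρ g' i
  exact inv_injective (matOf_injective (funext row_eq))

lemma algebraicIndependent_linForm {y ξ : Fin n → Fin n → ℂ}
    (hdual : ∀ i k : Fin n, (∑ j, ξ i j * y k j) = if i = k then 1 else 0) :
    AlgebraicIndependent ℂ fun i => linForm (ξ i) := by
  let changeCoord : MvPolynomial (Fin n) ℂ →ₐ[ℂ] MvPolynomial (Fin n) ℂ :=
    aeval fun j => ∑ k, C (y k j) * X k
  have changeCoord_linForm (i : Fin n) : changeCoord (linForm (ξ i)) = X i := calc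
    changeCoord (linForm (ξ i)) = ∑ j, ∑ k, C (ξ i j * y k j) * X k := by
      simp [changeCoord, linForm, algebraMap_eq, Finset.mul_sum, mul_assoc]
    _ = ∑ k, C (∑ j, ξ i j * y k j) * X k := by
      rw [Finset.sum_comm]
      simp only [← Finset.sum_mul, ← map_sum]
    _ = X i := by simp [hdual]
  refine AlgebraicIndependent.of_comp changeCoord ?_
  simpa only [Function.comp_def, changeCoord_linForm] using algebraicIndependent_X (Fin n) ℂ

variable [IsScalarTower ℂ (MvPolynomial (Fin n) ℂ) K]

lemma sum_smul_derivation_linForm {pd : Fin n → Derivation ℂ K K}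
    (hpd : ∀ (i : Fin n) (q : MvPolynomial (Fin n) ℂ),
      pd i (algebraMap (MvPolynomial (Fin n) ℂ) K q)
        = algebraMap (MvPolynomial (Fin n) ℂ) K (pderiv i q)) (a ξ : Fin n → ℂ) :
    (∑ j, a j • pd j) (algebraMap (MvPolynomial (Fin n) ℂ) K (linForm ξ))
      = algebraMap ℂ K (∑ j, ξ j * a j) := by
  have pderiv_linForm (j : Fin n) : pderiv j (linForm ξ) = C (ξ j) := by
    simp [linForm, pderiv_X, Pi.single_apply]
  rw [← Derivation.coeFn_coe, toLinearMap_sum_smul_derivation]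
  simp [hpd, pderiv_linForm, Algebra.smul_def, mul_comm,
    IsScalarTower.algebraMap_apply ℂ (MvPolynomial (Fin n) ℂ) K]

lemma ordMonomial_mulLinForm (ξ : Fin n → Fin n → ℂ) (k : Fin n → ℕ) :
    ordMonomial (fun i => mulLinForm n K (ξ i)) k
      = lmul ℂ K (∏ i, algebraMap (MvPolynomial (Fin n) ℂ) K (linForm (ξ i)) ^ k i) := by
  rw [← ordMonomial_eq_prod]
  exact (map_ordMonomial (lmul ℂ K : K →* Module.End ℂ K) _ k).symm

lemma dunklOp_sub_mem_crossedProduct {G : Subgroup (Matrix.GeneralLinearGroup (Fin n) ℂ)}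
    (S : Finset G) (c lam : G → ℂ) (α : G → Fin n → ℂ) (ρ : G →* (K ≃ₐ[ℂ] K))
    (pd : Fin n → Derivation ℂ K K) (a : Fin n → ℂ) :
    dunklOp n K S c lam α ρ pd a - ∑ j, a j • (pd j).toLinearMap ∈ crossedProduct ℂ K := by
  rw [dunklOp, sub_sub_cancel_left]
  exact neg_mem <| sum_mem fun s _ => Subalgebra.smul_mem _ (mul_mem (lmul_mem_crossedProduct _) <|
    sub_mem (one_mem _) (toLinearMap_mem_crossedProduct (ρ s).toAlgHom)) _

theorem cherednik_pbw_linear_independent_general [IsFractionRing (MvPolynomial (Fin n) ℂ) K]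
    {G : Subgroup (Matrix.GeneralLinearGroup (Fin n) ℂ)} {ρ : G →* (K ≃ₐ[ℂ] K)}
    (hρ : ∀ (g : G) (i : Fin n),
      ρ g (algebraMap (MvPolynomial (Fin n) ℂ) K (X i)) =
        algebraMap (MvPolynomial (Fin n) ℂ) K (∑ j, C (matOf g⁻¹ i j) * X j))
    {pd : Fin n → Derivation ℂ K K}
    (hpd : ∀ (i : Fin n) (q : MvPolynomial (Fin n) ℂ),
      pd i (algebraMap (MvPolynomial (Fin n) ℂ) K q)
        = algebraMap (MvPolynomial (Fin n) ℂ) K (pderiv i q))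
    {y ξ : Fin n → Fin n → ℂ}
    (hdual : ∀ i k : Fin n, (∑ j, ξ i j * y k j) = if i = k then 1 else 0)
    {D : Fin n → Module.End ℂ K}
    (hD : ∀ i, D i - ∑ j, y i j • (pd j).toLinearMap ∈ crossedProduct ℂ K) :
    LinearIndependent ℂ fun t : G × (Fin n → ℕ) × (Fin n → ℕ) =>
      (ρ t.1).toLinearMap * ordMonomial D t.2.1 *
        ordMonomial (fun i => mulLinForm n K (ξ i)) t.2.2 := by
  have : CharZero K := charZero_of_injective_algebraMap (algebraMap ℂ K).injective
  set x : Fin n → K := fun i => algebraMap (MvPolynomial (Fin n) ℂ) K (linForm (ξ i)) with hx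
  have x_indep : AlgebraicIndependent ℂ x :=
    (algebraicIndependent_linForm hdual).map' (f := IsScalarTower.toAlgHom ℂ _ K)
      (IsFractionRing.injective _ K)
  have derivation_x (i j : Fin n) : (∑ k, y j k • pd k) (x i) = if i = j then 1 else 0 := by
    rw [hx, sum_smul_derivation_linForm hpd, hdual, apply_ite (algebraMap ℂ K), map_one, map_zero]
  have family_indep := linearIndependent_toLinearMap_mul_ordMonomial_mul_lmul
    (linearIndependent_monomials_of_algebraicIndependent x_indep) derivation_x
    (fun i => by rw [toLinearMap_sum_smul_derivation]; exact hD i)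
  have index_injective : Function.Injective fun t : G × (Fin n → ℕ) × (Fin n → ℕ) =>
      (((ρ t.1 : K →ₐ[ℂ] K), t.2.1), t.2.2) := by
    rintro ⟨g, m, k⟩ ⟨g', m', k'⟩ h
    simp only [Prod.mk.injEq] at h ⊢
    exact ⟨injective_of_apply_X_eq hρ (AlgEquiv.coe_toAlgHom_injective h.1.1), h.1.2, h.2⟩
  have subfamily_indep := family_indep.comp _ index_injective
  simp only [Function.comp_def, hx, ← ordMonomial_mulLinForm] at subfamily_indep
  exact subfamily_indep

end DunklRepresentation

end

/-- **The PBW theorem for rational Cherednik algebras, in the faithful Dunkl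
representation.**  Let `G ⊆ GL_n(ℂ)` be a finite subgroup with reflections `S`, reflection
data `(α_s, λ_s)`, and conjugation-invariant parameters `c`.  Let `y₁,…,yₙ` be a basis of
`ℂⁿ` with dual basis `x₁,…,xₙ` of `(ℂⁿ)*` (given by coefficient vectors `ξ i`).  Then the
endomorphisms `ρ(g) ∘ D_{y₁}^{m₁} ⋯ D_{yₙ}^{mₙ} ∘ M_{x₁}^{k₁} ⋯ M_{xₙ}^{kₙ}` of
`K = ℂ(x₁,…,xₙ)`, indexed by `(g, m, k) ∈ G × ℕⁿ × ℕⁿ`, are linearly independent over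
`ℂ`. -/
theorem cherednik_pbw_linear_independent (n : ℕ) (hn : 1 ≤ n)
    (K : Type) [Field K] [Algebra ℂ K]
    [Algebra (MvPolynomial (Fin n) ℂ) K] [IsScalarTower ℂ (MvPolynomial (Fin n) ℂ) K]
    [IsFractionRing (MvPolynomial (Fin n) ℂ) K]
    (G : Subgroup (Matrix.GeneralLinearGroup (Fin n) ℂ)) [Finite G]
    (S : Finset G)
    (hS : ∀ s : G, s ∈ S ↔
      Matrix.rank ((1 : Matrix (Fin n) (Fin n) ℂ) - matOf s) = 1)
    (c lam : G → ℂ) (α : G → Fin n → ℂ)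
    (hc : ∀ (g s : G), s ∈ S → c (g * s * g⁻¹) = c s)
    (hlam : ∀ s ∈ S, lam s ≠ 1)
    (hα : ∀ s ∈ S, α s ≠ 0)
    (heig : ∀ s ∈ S, Matrix.vecMul (α s) (matOf s⁻¹) = lam s • α s)
    (ρ : G →* (K ≃ₐ[ℂ] K))
    (hρ : ∀ (g : G) (i : Fin n),
      ρ g (algebraMap (MvPolynomial (Fin n) ℂ) K (MvPolynomial.X i)) =
        algebraMap (MvPolynomial (Fin n) ℂ) K
          (∑ j, MvPolynomial.C (matOf g⁻¹ i j) * MvPolynomial.X j))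
    (pd : Fin n → Derivation ℂ K K)
    (hpd : ∀ (i : Fin n) (q : MvPolynomial (Fin n) ℂ),
      pd i (algebraMap (MvPolynomial (Fin n) ℂ) K q)
        = algebraMap (MvPolynomial (Fin n) ℂ) K (MvPolynomial.pderiv i q))
    (y ξ : Fin n → Fin n → ℂ)
    (hdual : ∀ i k : Fin n, (∑ j, ξ i j * y k j) = if i = k then 1 else 0) :
    LinearIndependent ℂ
      (fun t : G × (Fin n → ℕ) × (Fin n → ℕ) =>
        ((ρ t.1).toLinearMap *
            (List.ofFn fun i => (dunklOp n K S c lam α ρ pd (y i)) ^ (t.2.1 i)).prod *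
            (List.ofFn fun i => (mulLinForm n K (ξ i)) ^ (t.2.2 i)).prod
          : K →ₗ[ℂ] K)) :=
  cherednik_pbw_linear_independent_general hρ hpd hdual
    fun i => dunklOp_sub_mem_crossedProduct S c lam α ρ pd (y i)

end
end

section
/- Let W ⊂ O(ℝ^r) be a finite real reflection group with set of reflections S, roots α_s, and conjugation-invariant parameters c : S → ℂ. Then the rational function Σ_{s,u ∈ S, s ≠ u} c_s c_u (α_s,α_u) / (α_s(x) α_u(x)) is identically zero (as an element of ℂ(x_1,…,x_r)), where α_s(x) = (α_s, x). -/
open MvPolynomial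

noncomputable section

/-- The matrix underlying an element of a subgroup of `GL_r(ℝ)`. -/
def matOfR {r : ℕ} {W : Subgroup (Matrix.GeneralLinearGroup (Fin r) ℝ)} (w : W) :
    Matrix (Fin r) (Fin r) ℝ :=
  ((w : Matrix.GeneralLinearGroup (Fin r) ℝ) : Matrix (Fin r) (Fin r) ℝ)

/-- The complexified linear polynomial `Σᵢ aᵢ xᵢ` with real coefficient vector `a`. -/
def linFormR {r : ℕ} (a : Fin r → ℝ) : MvPolynomial (Fin r) ℂ :=
  ∑ i, MvPolynomial.C ((a i : ℂ)) * MvPolynomial.X i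

/-!
Let `φ` be the angular coordinate of a point `x` of a plane, measured so that unit roots `a`, `b` at
angle `θ` satisfy `(a, x) = |x| sin φ` and `(b, x) = |x| sin (φ - θ)`. Then
`(a, b) / ((a, x) (b, x)) = |x|⁻² cot θ (cot (φ - θ) - cot φ)`.
Hence every cross term is the difference of the values of one function on the pairs `(s, u)` and
`(u, u s u⁻¹)`: both pairs span the same plane and enclose the same angle. The Hurwitz move
`(s, u) ↦ (u, u s u⁻¹)` permutes the pairs of distinct reflections and preserves `c_s c_u`, so the
sum telescopes to zero. For the projection of a generic `x` to the plane, `|x|²` times a Gram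
determinant is a quadratic polynomial in `x`; it is not the zero polynomial since, by strict
Cauchy–Schwarz, it does not vanish at `x = a`.
-/

section HurwitzMove

variable {G M : Type*} [Group G] [DecidableEq G] [AddCommMonoid M] {S : Finset G}

lemma sum_erase_conj {u : G} (hconj : ∀ s ∈ S, u * s * u⁻¹ ∈ S) (f : G → M) :
    ∑ s ∈ S.erase u, f (u * s * u⁻¹) = ∑ s ∈ S.erase u, f s := by
  let conjEmb : G ↪ G := (MulAut.conj u).toEquiv.toEmbedding
  have hmap : (S.erase u).map conjEmb = S.erase u := by
    refine Finset.map_eq_of_subset fun t ht ↦ ?_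
    obtain ⟨s, hs, rfl⟩ := Finset.mem_map.1 ht
    obtain ⟨hsu, hsS⟩ := Finset.mem_erase.1 hs
    exact Finset.mem_erase.2 ⟨fun h ↦ hsu (by simpa [conjEmb, mul_inv_eq_iff_eq_mul] using h),
      hconj s hsS⟩
  calc ∑ s ∈ S.erase u, f (u * s * u⁻¹) = ∑ s ∈ (S.erase u).map conjEmb, f s := by
        rw [Finset.sum_map]; rfl
    _ = ∑ s ∈ S.erase u, f s := by rw [hmap]

lemma sum_sum_erase_hurwitz (hconj : ∀ s ∈ S, ∀ u ∈ S, u * s * u⁻¹ ∈ S) (f : G → G → M) :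
    ∑ s ∈ S, ∑ u ∈ S.erase s, f u (u * s * u⁻¹) = ∑ s ∈ S, ∑ u ∈ S.erase s, f s u := by
  calc ∑ s ∈ S, ∑ u ∈ S.erase s, f u (u * s * u⁻¹)
      = ∑ u ∈ S, ∑ s ∈ S.erase u, f u (u * s * u⁻¹) :=
        Finset.sum_comm' fun s u ↦ by simp only [Finset.mem_erase]; tauto
    _ = ∑ u ∈ S, ∑ s ∈ S.erase u, f u s :=
        Finset.sum_congr rfl fun u hu ↦ sum_erase_conj (fun s hs ↦ hconj s hs u hu) (f u)

end HurwitzMove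

section HyperplaneReflection

variable {F V : Type*} [Field F] [AddCommGroup V] [Module F V] {B : LinearMap.BilinForm F V}

variable (B) in
/-- The reflection `v ↦ v - (2 B(a, v) / B(a, a)) a` in the hyperplane `B`-orthogonal to `a`. If
`B(a, a) = 0` then division by zero makes it the identity. -/
def hyperplaneReflection (a : V) : Module.End F V :=
  Module.preReflection a ((2 / B a a) • B a)

lemma hyperplaneReflection_apply (a v : V) :
    hyperplaneReflection B a v = v - (2 * B a v / B a a) • a := by
  simp [hyperplaneReflection, Module.preReflection_apply, div_mul_eq_mul_div]

lemma hyperplaneReflection_self {a : V} (ha : B a a ≠ 0) : hyperplaneReflection B a a = -a :=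
  Module.preReflection_apply_self (by simp [ha])

lemma hyperplaneReflection_smul {k : F} (hk : k ≠ 0) (a : V) :
    hyperplaneReflection B (k • a) = hyperplaneReflection B a := by
  ext v
  simp only [hyperplaneReflection_apply, map_smul, LinearMap.smul_apply, smul_smul, smul_eq_mul]
  congr 2
  field_simp

lemma eq_smul_of_hyperplaneReflection_eq_neg [NeZero (2 : F)] {a v : V}
    (h : hyperplaneReflection B a v = -v) : v = (B a v / B a a) • a := by
  rw [hyperplaneReflection_apply, sub_eq_iff_eq_add, eq_neg_add_iff_add_eq, ← two_smul F v,
    mul_div_assoc, mul_smul] at h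
  exact smul_right_injective V two_ne_zero h

lemma apply_hyperplaneReflection (hB : B.IsSymm) {a : V} (ha : B a a ≠ 0) (v w : V) :
    B (hyperplaneReflection B a v) (hyperplaneReflection B a w) = B v w := by
  have hva : B v a = B a v := hB.eq v a
  simp only [hyperplaneReflection_apply, map_sub, map_smul, LinearMap.sub_apply,
    LinearMap.smul_apply, smul_eq_mul, hva]
  field_simp
  ring

lemma apply_hyperplaneReflection_right {a : V} (ha : B a a ≠ 0) (v : V) :
    B a (hyperplaneReflection B a v) = -B a v := by
  simp only [hyperplaneReflection_apply, map_sub, map_smul, smul_eq_mul]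
  field_simp
  ring

lemma linearIndependent_of_hyperplaneReflection_ne {a b : V} (ha : a ≠ 0) (hb : b ≠ 0)
    (hab : hyperplaneReflection B a ≠ hyperplaneReflection B b) :
    LinearIndependent F ![a, b] := by
  refine (LinearIndependent.pair_iff' ha).2 ?_
  rintro k rfl
  exact hab (hyperplaneReflection_smul (left_ne_zero_of_smul hb) a).symm

lemma exists_eq_smul_hyperplaneReflection_of_mul_eq [NeZero (2 : F)] (hB : B.IsSymm) {a b d : V}
    (ha : B a a ≠ 0) (hb : B b b ≠ 0)
    (hconj : hyperplaneReflection B d * hyperplaneReflection B b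
      = hyperplaneReflection B b * hyperplaneReflection B a) :
    ∃ l : F, l ≠ 0 ∧ d = l • hyperplaneReflection B b a := by
  set w := hyperplaneReflection B b a with hw
  have hneg : hyperplaneReflection B d w = -w := by
    rw [hw, ← Module.End.mul_apply, hconj, Module.End.mul_apply, hyperplaneReflection_self ha,
      map_neg]
  have hwd : w = (B d w / B d d) • d := eq_smul_of_hyperplaneReflection_eq_neg hneg
  have hw0 : w ≠ 0 := by
    intro h
    apply ha
    rw [← apply_hyperplaneReflection hB hb a a, ← hw, h, map_zero]
  have hk : B d w / B d d ≠ 0 := left_ne_zero_of_smul (hwd ▸ hw0)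
  exact ⟨(B d w / B d d)⁻¹, inv_ne_zero hk, (eq_inv_smul_iff₀ hk).2 hwd.symm⟩

end HyperplaneReflection

section CotangentPotential

variable {F V A K : Type*} [Field F] [AddCommGroup V] [Module F V] [CommRing A] [Algebra F A]
  [Field K] [Algebra F K] {B : LinearMap.BilinForm F V}

variable (B) in
/-- For `L = B(x, ·)`, the squared `B`-norm of the projection of `x` to the plane spanned by `a`
and `b`, multiplied by the Gram determinant of `a` and `b`. -/
def planarNormSq (L : V →ₗ[F] A) (a b : V) : A :=
  algebraMap F A (B b b) * L a ^ 2 + algebraMap F A (B a a) * L b ^ 2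
    - 2 * algebraMap F A (B a b) * L a * L b

variable (B) in
/-- The potential whose differences under the Hurwitz move are the cross terms. For `L = B(x, ·)` it
equals `|x|⁻² (cot² θ - cot θ cot φ)`, where `|x|` is the norm of the projection of `x` to the
oriented plane of `a` and `b`, and `φ`, `θ` are the angles with `B(a, x) = |a| |x| sin φ` and
`B(b, x) = |b| |x| sin (φ - θ)`. -/
def cotPotential (L : V →ₗ[F] K) (a b : V) : K :=
  algebraMap F K (B a b) * algebraMap F K (B a a) * L b / (L a * planarNormSq B L a b)

lemma planarNormSq_comp {A' : Type*} [CommRing A'] [Algebra F A'] (f : A →ₐ[F] A')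
    (L : V →ₗ[F] A) (a b : V) :
    planarNormSq B (f.toLinearMap ∘ₗ L) a b = f (planarNormSq B L a b) := by
  simp [planarNormSq, map_ofNat]

lemma planarNormSq_apply_left (a b : V) :
    planarNormSq B (B a) a b = B a a * (B a a * B b b - B a b ^ 2) := by
  simp only [planarNormSq, Algebra.algebraMap_self, RingHom.id_apply]
  ring

lemma planarNormSq_apply_left_ne_zero [LinearOrder F] [IsStrictOrderedRing F] (hB : B.IsSymm)
    (hpos : ∀ v, v ≠ 0 → 0 < B v v) {a b : V} (hab : LinearIndependent F ![a, b]) :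
    planarNormSq B (B a) a b ≠ 0 := by
  have hgram : B a b ^ 2 < B a a * B b b :=
    (LinearMap.BilinForm.apply_sq_lt_iff_linearIndependent_of_symm B hpos
      (LinearMap.BilinForm.isSymm_iff.1 hB) a b).2 hab
  rw [planarNormSq_apply_left]
  exact mul_ne_zero (hpos a (hab.ne_zero 0)).ne' (sub_pos.2 hgram).ne'

lemma planarNormSq_smul_right (L : V →ₗ[F] A) (l : F) (a b : V) :
    planarNormSq B L a (l • b) = algebraMap F A l ^ 2 * planarNormSq B L a b := by
  simp only [planarNormSq, map_smul, LinearMap.smul_apply, smul_eq_mul, map_mul, Algebra.smul_def]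
  ring

lemma planarNormSq_hyperplaneReflection (hB : B.IsSymm) (L : V →ₗ[F] A) (a : V) {b : V}
    (hb : B b b ≠ 0) :
    planarNormSq B L b (hyperplaneReflection B b a) = planarNormSq B L a b := by
  have hcoeff : algebraMap F A (B b b) * algebraMap F A (2 * B b a / B b b)
      = 2 * algebraMap F A (B b a) := by
    rw [← map_mul, mul_div_cancel₀ _ hb, map_mul, map_ofNat]
  have hab : B a b = B b a := hB.eq a b
  simp only [planarNormSq, apply_hyperplaneReflection hB hb, apply_hyperplaneReflection_right hb,
    hab, map_neg]
  rw [hyperplaneReflection_apply, map_sub, map_smul, Algebra.smul_def]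
  linear_combination (algebraMap F A (2 * B b a / B b b) * L b ^ 2 - 2 * L a * L b) * hcoeff

lemma cotPotential_smul_right (L : V →ₗ[F] K) {l : F} (hl : l ≠ 0) (a b : V) :
    cotPotential B L a (l • b) = cotPotential B L a b := by
  have hl' : algebraMap F K l ≠ 0 := (map_ne_zero _).2 hl
  simp only [cotPotential, planarNormSq_smul_right, map_smul, smul_eq_mul, map_mul,
    Algebra.smul_def]
  field_simp

lemma cotPotential_sub_hyperplaneReflection (hB : B.IsSymm) {L : V →ₗ[F] K} {a b : V}
    (hb : B b b ≠ 0) (hLa : L a ≠ 0) (hLb : L b ≠ 0) (hab : planarNormSq B L a b ≠ 0) :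
    cotPotential B L a b - cotPotential B L b (hyperplaneReflection B b a)
      = B a b • (L a * L b)⁻¹ := by
  have hb' : algebraMap F K (B b b) ≠ 0 := (map_ne_zero _).2 hb
  have hsymm : B b a = B a b := hB.eq b a
  rw [cotPotential, cotPotential, planarNormSq_hyperplaneReflection hB L a hb,
    apply_hyperplaneReflection_right hb, hyperplaneReflection_apply, hsymm]
  simp only [map_sub, map_smul, Algebra.smul_def, map_neg, map_div₀, map_mul, map_ofNat]
  field_simp
  rw [planarNormSq]
  ring

end CotangentPotential

section CrossTerms

variable {G F V K R : Type*} [Group G] [DecidableEq G] [Field F] [AddCommGroup V] [Module F V]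
  [Field K] [Algebra F K] [CommRing R] [Module R K] {B : LinearMap.BilinForm F V}

theorem sum_cross_terms_eq_zero (hB : B.IsSymm) (L : V →ₗ[F] K) {S : Finset G}
    (hconj : ∀ s ∈ S, ∀ u ∈ S, u * s * u⁻¹ ∈ S) {α : G → V}
    (hroot : ∀ s ∈ S, ∀ u ∈ S, ∃ l : F, l ≠ 0 ∧
      α (u * s * u⁻¹) = l • hyperplaneReflection B (α u) (α s))
    (hα : ∀ s ∈ S, B (α s) (α s) ≠ 0) (hL : ∀ s ∈ S, L (α s) ≠ 0)
    (hplane : ∀ s ∈ S, ∀ u ∈ S, s ≠ u → planarNormSq B L (α s) (α u) ≠ 0)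
    {c : G → R} (hc : ∀ s ∈ S, ∀ u ∈ S, c (u * s * u⁻¹) = c s) :
    ∑ s ∈ S, ∑ u ∈ S.erase s, (c s * c u) • B (α s) (α u) • (L (α s) * L (α u))⁻¹ = 0 := by
  let P (s u : G) : K := (c s * c u) • cotPotential B L (α s) (α u)
  have hterm : ∀ s ∈ S, ∀ u ∈ S.erase s,
      (c s * c u) • B (α s) (α u) • (L (α s) * L (α u))⁻¹ = P s u - P u (u * s * u⁻¹) := by
    intro s hs u hu'
    obtain ⟨hus, hu⟩ := Finset.mem_erase.1 hu'
    obtain ⟨l, hl, hαl⟩ := hroot s hs u hu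
    simp only [P]
    rw [hc s hs u hu, mul_comm (c u), ← smul_sub, hαl, cotPotential_smul_right L hl,
      cotPotential_sub_hyperplaneReflection hB (hα u hu) (hL s hs) (hL u hu)
        (hplane s hs u hu hus.symm)]
  rw [Finset.sum_congr rfl fun s hs ↦ Finset.sum_congr rfl (hterm s hs)]
  simp only [Finset.sum_sub_distrib]
  rw [sum_sum_erase_hurwitz hconj P, sub_self]

end CrossTerms

section DotProduct

variable {n : Type*} [Fintype n]

lemma dotProductBilin_isSymm {R : Type*} [CommSemiring R] :
    LinearMap.BilinForm.IsSymm (dotProductBilin R R : LinearMap.BilinForm R (n → R)) :=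
  ⟨dotProduct_comm⟩

lemma dotProductBilin_self_pos {a : n → ℝ} (ha : a ≠ 0) :
    0 < (dotProductBilin ℝ ℝ : LinearMap.BilinForm ℝ (n → ℝ)) a a := by
  simpa using Matrix.dotProduct_star_self_pos_iff.2 ha

end DotProduct

section LinearFormPolynomials

variable {r : ℕ}

/-- `linFormR` as an `ℝ`-linear map, so that it can be the linear form `L` of `planarNormSq`. -/
def linFormRHom (r : ℕ) : (Fin r → ℝ) →ₗ[ℝ] MvPolynomial (Fin r) ℂ where
  toFun := linFormR
  map_add' a b := by simp [linFormR, add_mul, Finset.sum_add_distrib]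
  map_smul' k a := by
    simp [linFormR, Finset.mul_sum, mul_assoc, Algebra.smul_def, MvPolynomial.algebraMap_apply]

lemma aeval_linFormR (x a : Fin r → ℝ) :
    MvPolynomial.aeval (fun i ↦ (x i : ℂ)) (linFormR a) = ((x ⬝ᵥ a : ℝ) : ℂ) := by
  simp [linFormR, dotProduct, mul_comm]

lemma linFormR_ne_zero {a : Fin r → ℝ} (ha : a ≠ 0) : linFormR a ≠ 0 := by
  intro h
  have heval := aeval_linFormR a a
  rw [h, map_zero, eq_comm, Complex.ofReal_eq_zero, dotProduct_self_eq_zero] at heval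
  exact ha heval

lemma planarNormSq_linFormRHom_ne_zero {a b : Fin r → ℝ} (hab : LinearIndependent ℝ ![a, b]) :
    planarNormSq (dotProductBilin ℝ ℝ) (linFormRHom r) a b ≠ 0 := by
  let evalAt : MvPolynomial (Fin r) ℂ →ₐ[ℝ] ℂ :=
    (MvPolynomial.aeval fun i ↦ (a i : ℂ)).restrictScalars ℝ
  have heval : evalAt.toLinearMap ∘ₗ linFormRHom r
      = Complex.ofRealAm.toLinearMap ∘ₗ dotProductBilin ℝ ℝ a :=
    LinearMap.ext fun b ↦ aeval_linFormR a b
  intro h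
  have hzero : Complex.ofRealAm (planarNormSq (dotProductBilin ℝ ℝ) (dotProductBilin ℝ ℝ a) a b)
      = 0 := by
    rw [← planarNormSq_comp, ← heval, planarNormSq_comp, h, map_zero]
  exact planarNormSq_apply_left_ne_zero dotProductBilin_isSymm
    (fun _ ↦ dotProductBilin_self_pos) hab (Complex.ofReal_eq_zero.1 hzero)

end LinearFormPolynomials

section ReflectionsInLinearGroups

lemma rank_one_sub_conj_s4 {n R : Type*} [Fintype n] [DecidableEq n] [CommRing R]
    (g s : Matrix.GeneralLinearGroup n R) :
    (1 - (g * s * g⁻¹ : Matrix.GeneralLinearGroup n R).val).rank = (1 - s.val).rank := by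
  have hfactor : 1 - (g * s * g⁻¹ : Matrix.GeneralLinearGroup n R).val
      = g.val * ((1 - s.val) * (g⁻¹).val) := by
    rw [Units.val_mul, Units.val_mul, sub_mul, one_mul, mul_sub, Units.mul_inv, mul_assoc]
  rw [hfactor, Matrix.rank_mul_eq_right_of_isUnit_det _ _ (Matrix.isUnits_det_units g),
    Matrix.rank_mul_eq_left_of_isUnit_det _ _ (Matrix.isUnits_det_units g⁻¹)]

variable {r : ℕ} {W : Subgroup (Matrix.GeneralLinearGroup (Fin r) ℝ)}

lemma matOfR_mul (g h : W) : matOfR (g * h) = matOfR g * matOfR h := rfl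

lemma matOfR_injective : Function.Injective (matOfR : W → Matrix (Fin r) (Fin r) ℝ) :=
  Units.val_injective.comp Subtype.val_injective

lemma exists_eq_smul_hyperplaneReflection_conj {B : LinearMap.BilinForm ℝ (Fin r → ℝ)}
    (hB : B.IsSymm) {s u : W} {a b d : Fin r → ℝ} (ha : B a a ≠ 0) (hb : B b b ≠ 0)
    (hs : Matrix.toLin' (matOfR s) = hyperplaneReflection B a)
    (hu : Matrix.toLin' (matOfR u) = hyperplaneReflection B b)
    (hd : Matrix.toLin' (matOfR (u * s * u⁻¹)) = hyperplaneReflection B d) :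
    ∃ l : ℝ, l ≠ 0 ∧ d = l • hyperplaneReflection B b a := by
  refine exists_eq_smul_hyperplaneReflection_of_mul_eq hB ha hb ?_
  rw [← hd, ← hs, ← hu, Module.End.mul_eq_comp, Module.End.mul_eq_comp, ← Matrix.toLin'_mul,
    ← Matrix.toLin'_mul, ← matOfR_mul, ← matOfR_mul, inv_mul_cancel_right]

theorem cross_terms_vanish_general {r : ℕ} {K : Type*} [Field K] [Algebra ℂ K]
    [Algebra (MvPolynomial (Fin r) ℂ) K] [IsScalarTower ℂ (MvPolynomial (Fin r) ℂ) K]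
    [FaithfulSMul (MvPolynomial (Fin r) ℂ) K]
    {W : Subgroup (Matrix.GeneralLinearGroup (Fin r) ℝ)} {S : Finset W}
    (hconj : ∀ s ∈ S, ∀ u ∈ S, u * s * u⁻¹ ∈ S)
    {α : W → Fin r → ℝ} (hα : ∀ s ∈ S, α s ≠ 0)
    (hrefl : ∀ s ∈ S, ∀ v : Fin r → ℝ,
      (matOfR s).mulVec v = v - (2 * (α s ⬝ᵥ v) / (α s ⬝ᵥ α s)) • α s)
    {c : W → ℂ} (hc : ∀ s ∈ S, ∀ u ∈ S, c (u * s * u⁻¹) = c s) :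
    ∑ s ∈ S, ∑ u ∈ S.erase s, (c s * c u * ((α s ⬝ᵥ α u : ℝ) : ℂ)) •
      (algebraMap (MvPolynomial (Fin r) ℂ) K (linFormR (α s)) *
        algebraMap (MvPolynomial (Fin r) ℂ) K (linFormR (α u)))⁻¹ = 0 := by
  let B : LinearMap.BilinForm ℝ (Fin r → ℝ) := dotProductBilin ℝ ℝ
  let ι : MvPolynomial (Fin r) ℂ →ₐ[ℝ] K :=
    (IsScalarTower.toAlgHom ℂ (MvPolynomial (Fin r) ℂ) K).restrictScalars ℝ
  have hι : Function.Injective ι := FaithfulSMul.algebraMap_injective (MvPolynomial (Fin r) ℂ) K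
  have hB : B.IsSymm := dotProductBilin_isSymm
  have hαα : ∀ s ∈ S, B (α s) (α s) ≠ 0 := fun s hs ↦ (dotProductBilin_self_pos (hα s hs)).ne'
  have hmat : ∀ s ∈ S, Matrix.toLin' (matOfR s) = hyperplaneReflection B (α s) := fun s hs ↦
    LinearMap.ext fun v ↦ (hrefl s hs v).trans (hyperplaneReflection_apply (B := B) (α s) v).symm
  have hroot : ∀ s ∈ S, ∀ u ∈ S, ∃ l : ℝ, l ≠ 0 ∧
      α (u * s * u⁻¹) = l • hyperplaneReflection B (α u) (α s) := fun s hs u hu ↦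
    exists_eq_smul_hyperplaneReflection_conj hB (hαα s hs) (hαα u hu) (hmat s hs) (hmat u hu)
      (hmat _ (hconj s hs u hu))
  have hplane : ∀ s ∈ S, ∀ u ∈ S, s ≠ u →
      planarNormSq B (ι.toLinearMap ∘ₗ linFormRHom r) (α s) (α u) ≠ 0 := by
    intro s hs u hu hsu
    rw [planarNormSq_comp, map_ne_zero_iff ι hι]
    refine planarNormSq_linFormRHom_ne_zero
      (linearIndependent_of_hyperplaneReflection_ne (B := B) (hα s hs) (hα u hu) fun h ↦ hsu ?_)
    rw [← hmat s hs, ← hmat u hu] at h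
    exact matOfR_injective (Matrix.toLin'.injective h)
  have hsum := sum_cross_terms_eq_zero hB (ι.toLinearMap ∘ₗ linFormRHom r) hconj hroot hαα
    (fun s hs ↦ (map_ne_zero_iff ι hι).2 (linFormR_ne_zero (hα s hs))) hplane hc
  simp only [mul_smul (c _ * c _), Complex.coe_smul]
  exact hsum

end ReflectionsInLinearGroups

/-- For a finite real reflection group `W ⊆ O(ℝ^r)` with set of reflections `S`, roots
`α_s`, and conjugation-invariant parameters `c : S → ℂ`, the rational function
`Σ_{s ≠ u ∈ S} c_s c_u (α_s, α_u)/(α_s(x) α_u(x))` vanishes identically, as an element of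
the field `K = ℂ(x₁,…,x_r)`. -/
theorem cross_terms_vanish (r : ℕ) (hr : 1 ≤ r)
    (K : Type) [Field K] [Algebra ℂ K]
    [Algebra (MvPolynomial (Fin r) ℂ) K] [IsScalarTower ℂ (MvPolynomial (Fin r) ℂ) K]
    [IsFractionRing (MvPolynomial (Fin r) ℂ) K]
    (W : Subgroup (Matrix.GeneralLinearGroup (Fin r) ℝ)) [Finite W]
    (hOrth : ∀ w : W, (Matrix.transpose (matOfR w)) * matOfR w = 1)
    (S : Finset W)
    (hS : ∀ s : W, s ∈ S ↔
      Matrix.rank ((1 : Matrix (Fin r) (Fin r) ℝ) - matOfR s) = 1)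
    (hgen : Subgroup.closure (S : Set W) = (⊤ : Subgroup W))
    (α : W → Fin r → ℝ)
    (hα : ∀ s ∈ S, α s ≠ 0)
    (hrefl : ∀ s ∈ S, ∀ v : Fin r → ℝ,
      Matrix.mulVec (matOfR s) v
        = v - (2 * (∑ i, α s i * v i) / (∑ i, α s i * α s i)) • α s)
    (c : W → ℂ)
    (hc : ∀ (g s : W), s ∈ S → c (g * s * g⁻¹) = c s) :
    ∑ s ∈ S, ∑ u ∈ S.erase s,
        (c s * c u * (((∑ i, α s i * α u i : ℝ) : ℂ))) •
          ((algebraMap (MvPolynomial (Fin r) ℂ) K (linFormR (α s)) *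
              algebraMap (MvPolynomial (Fin r) ℂ) K (linFormR (α u)))⁻¹)
      = 0 := by
  refine cross_terms_vanish_general (fun s hs u _ ↦ ?_) hα hrefl fun s hs u _ ↦ hc u s hs
  exact (hS _).2 ((rank_one_sub_conj_s4 u.val s.val).trans ((hS s).1 hs))

end
end

section
/- (Uniqueness lemma; R. Raj.) Let n ≥ 1 and let ψ be a polynomial in variables p_1,…,p_n with coefficients in the field ℂ(x_1,…,x_n) of rational functions (i.e. ψ is a rational function on ℂ^n × ℂ^n that is polynomial in p). Let f ∈ ℂ[p_1,…,p_n] be a polynomial such that the gradients ∇f(p), as p ranges over ℂ^n, span ℂ^n (for example f(p) = p_1^2 + ⋯ + p_n^2). If the Poisson bracket of ψ and f vanishes, i.e. Σ_{i=1}^n (∂ψ/∂x_i)(∂f/∂p_i) = 0, then all coefficients of ψ (as a polynomial in p) are polynomials in x; that is, ψ ∈ ℂ[x_1,…,x_n,p_1,…,p_n]. -/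
open MvPolynomial

/-!
Write `ψ = Ψ / g` in lowest terms, with `g ∈ ℂ[x]` and `Ψ ∈ ℂ[x][p]`, and put `F = ∇f`. Clearing
denominators in `∑ᵢ (∂ψ/∂xᵢ) Fᵢ = 0` gives `g ∣ Ψ * ∑ᵢ (∂g/∂xᵢ) Fᵢ`, and coprimality removes the
factor `Ψ`. Evaluating at a point `p` shows that `g` divides its own derivative in the direction
`F(p)`. These directions span, so `g` divides all its partial derivatives; as these have smaller
degree they vanish, and `g` is a constant.
-/

section PartialDerivatives

variable {σ R : Type*}

lemma degreeOf_pderiv_lt [CommSemiring R] {g : MvPolynomial σ R} {j : σ} (h : pderiv j g ≠ 0) :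
    degreeOf j (pderiv j g) < degreeOf j g := by
  have exponent_lt : ∀ m ∈ (pderiv j g).support, m j < degreeOf j g := by
    intro m hm
    rw [mem_support_iff, coeff_pderiv] at hm
    have hm' := monomial_le_degreeOf j (mem_support_iff.mpr (left_ne_zero_of_mul hm))
    rwa [Finsupp.add_apply, Finsupp.single_eq_same] at hm'
  obtain ⟨m, hm⟩ := support_nonempty.mpr h
  exact (degreeOf_lt_iff (Nat.zero_lt_of_lt (exponent_lt m hm))).mpr exponent_lt

lemma pderiv_eq_zero_of_dvd_pderiv [CommSemiring R] [NoZeroDivisors R] {g : MvPolynomial σ R}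
    {j : σ} (h : g ∣ pderiv j g) : pderiv j g = 0 := by
  by_contra hne
  obtain ⟨q, hq⟩ := h
  have hgq : g ≠ 0 ∧ q ≠ 0 := mul_ne_zero_iff.mp (hq ▸ hne)
  have hlt := degreeOf_pderiv_lt hne
  rw [hq, degreeOf_mul_eq hgq.1 hgq.2] at hlt
  omega

lemma eq_C_of_forall_pderiv_eq_zero [CommRing R] [IsAddTorsionFree R] {g : MvPolynomial σ R}
    (h : ∀ j, pderiv j g = 0) : g = C (constantCoeff g) := by
  apply MvPolynomial.coe_injective
  apply MvPowerSeries.pderiv.ext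
  · intro j
    rw [MvPowerSeries.pderiv_coe, MvPowerSeries.pderiv_coe, h, pderiv_C]
  · exact (constantCoeff_C σ _).symm

lemma isUnit_of_forall_dvd_pderiv [Field R] [CharZero R] {g : MvPolynomial σ R} (hg : g ≠ 0)
    (h : ∀ j, g ∣ pderiv j g) : IsUnit g := by
  have hgC := eq_C_of_forall_pderiv_eq_zero fun j => pderiv_eq_zero_of_dvd_pderiv (h j)
  have hc : constantCoeff g ≠ 0 := fun hc => hg (by rw [hgC, hc, C_0])
  rw [hgC]
  exact hc.isUnit.map C

end PartialDerivatives

section Denominators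

variable {τ : Type*}

lemma exists_C_mul_eq_map {A K : Type*} [CommRing A] (M : Submonoid A) [CommRing K] [Algebra A K]
    [IsLocalization M K] (ψ : MvPolynomial τ K) :
    ∃ q ∈ M, ∃ Ψ : MvPolynomial τ A,
      C (algebraMap A K q) * ψ = map (algebraMap A K) Ψ := by
  let _ : Algebra (MvPolynomial τ A) (MvPolynomial τ K) := algebraMvPolynomial
  obtain ⟨⟨Ψ, _, q, hq, rfl⟩, hqψ⟩ :=
    IsLocalization.surj (M := M.map (C (σ := τ))) ψ
  refine ⟨q, hq, Ψ, ?_⟩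
  rw [mul_comm, ← map_C]
  exact hqψ

lemma exists_isRelPrime_C_mul_eq_map (A : Type*) {K : Type*} [CommRing A] [IsDomain A]
    [UniqueFactorizationMonoid A] [Field K] [Algebra A K] [IsFractionRing A K]
    (ψ : MvPolynomial τ K) :
    ∃ g : A, g ≠ 0 ∧ ∃ Ψ : MvPolynomial τ A, IsRelPrime (C g) Ψ ∧
      C (algebraMap A K g) * ψ = map (algebraMap A K) Ψ := by
  obtain ⟨q, hq, Ψ₀, hqψ⟩ := exists_C_mul_eq_map (nonZeroDivisors A) ψ
  have hq0 : q ≠ 0 := nonZeroDivisors.ne_zero hq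
  obtain ⟨Ψ, a, c, hrel, rfl, hca⟩ :=
    UniqueFactorizationMonoid.exists_reduced_factors' Ψ₀ (C q) (C_ne_zero.mpr hq0)
  obtain ⟨g, -, rfl⟩ := (dvd_C_iff_exists hq0).mp (Dvd.intro_left c hca)
  obtain ⟨hc, hg⟩ := mul_ne_zero_iff.mp (hca ▸ C_ne_zero.mpr hq0)
  have hinj := map_injective (σ := τ) (algebraMap A K) (IsFractionRing.injective A K)
  refine ⟨g, C_ne_zero.mp hg, Ψ, hrel.symm,
    mul_left_cancel₀ ((map_ne_zero_iff _ hinj).mpr hc) ?_⟩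
  rw [← map_C, ← mul_assoc, ← map_mul, hca, map_C, hqψ, map_mul]

end Denominators

section CoefficientwiseDerivations

variable {R A B ι τ : Type*} [CommSemiring R] [CommSemiring A] [CommSemiring B] [Algebra R B]
  {f : A →+* B}

lemma derivation_map_mem_rangeS_map {D : Derivation R (MvPolynomial τ B) (MvPolynomial τ B)}
    {δ : A → A} (hC : ∀ a, D (C (f a)) = C (f (δ a))) (hX : ∀ j, D (X j) = 0)
    (Φ : MvPolynomial τ A) :
    D (map f Φ) ∈ (map f : MvPolynomial τ A →+* MvPolynomial τ B).rangeS := by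
  induction Φ using MvPolynomial.induction_on with
  | C a => exact ⟨C (δ a), by rw [map_C, map_C, hC]⟩
  | add Φ Φ' hΦ hΦ' =>
    rw [map_add, map_add]
    exact add_mem hΦ hΦ'
  | mul_X Φ j hΦ =>
    rw [map_mul, map_X, D.leibniz, hX, smul_zero, zero_add, smul_eq_mul]
    exact mul_mem ⟨X j, map_X f j⟩ hΦ

lemma C_dvd_mul_sum_of_sum_derivation_eq_zero [Fintype ι] (hf : Function.Injective f)
    {D : ι → Derivation R (MvPolynomial τ B) (MvPolynomial τ B)} {δ : ι → A → A}
    (hC : ∀ i a, D i (C (f a)) = C (f (δ i a))) (hX : ∀ i j, D i (X j) = 0)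
    {g : A} {Ψ : MvPolynomial τ A} {ψ : MvPolynomial τ B} (hψ : C (f g) * ψ = map f Ψ)
    {F : ι → MvPolynomial τ A} (hsum : ∑ i, D i ψ * map f (F i) = 0) :
    C g ∣ Ψ * ∑ i, C (δ i g) * F i := by
  choose θ hθ using fun i => derivation_map_mem_rangeS_map (hC i) (hX i) Ψ
  have quotient_rule (i : ι) : map f (θ i) = C (f g) * D i ψ + ψ * C (f (δ i g)) := by
    rw [hθ, ← hψ, (D i).leibniz, hC, smul_eq_mul, smul_eq_mul]
  have sum_map_θ : ∑ i, map f (θ i) * map f (F i) = ψ * ∑ i, C (f (δ i g)) * map f (F i) :=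
    calc ∑ i, map f (θ i) * map f (F i)
        = C (f g) * ∑ i, D i ψ * map f (F i) + ψ * ∑ i, C (f (δ i g)) * map f (F i) := by
          simp only [quotient_rule, add_mul, Finset.sum_add_distrib, Finset.mul_sum, mul_assoc]
      _ = ψ * ∑ i, C (f (δ i g)) * map f (F i) := by rw [hsum, mul_zero, zero_add]
  refine ⟨∑ i, θ i * F i, map_injective f hf ?_⟩
  simp only [map_mul, map_sum, map_C, sum_map_θ, ← hψ, mul_assoc]

end CoefficientwiseDerivations

lemma dvd_of_C_dvd_sum_of_span_eval_eq_top {k A ι τ : Type*} [CommSemiring k] [CommSemiring A]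
    [Algebra k A] [Fintype ι] {F : ι → MvPolynomial τ k}
    (hF : Submodule.span k (Set.range fun (p : τ → k) (i : ι) => eval p (F i)) = ⊤)
    {g : A} {v : ι → A} (h : C g ∣ ∑ i, C (v i) * map (algebraMap k A) (F i)) (j : ι) :
    g ∣ v j := by
  classical
  let directions : Submodule k (ι → k) :=
    ((Ideal.span {g}).restrictScalars k).comap (Fintype.linearCombination k v)
  have mem_directions (c : ι → k) : c ∈ directions ↔ g ∣ ∑ i, c i • v i :=
    Ideal.mem_span_singleton
  have htop : directions = ⊤ := by
    rw [eq_top_iff, ← hF, Submodule.span_le]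
    rintro _ ⟨p, rfl⟩
    have heval := map_dvd (eval (algebraMap k A ∘ p)) h
    simp only [map_sum, map_mul, eval_C, ← map_eval] at heval
    simpa only [SetLike.mem_coe, mem_directions, Algebra.smul_def, mul_comm] using heval
  simpa [Pi.single_apply] using (mem_directions (Pi.single j 1)).mp (htop ▸ Submodule.mem_top)

theorem raj_lemma_general {k σ τ K : Type*} [Field k] [CharZero k] [Fintype σ] [Field K]
    [Algebra k K] [Algebra (MvPolynomial σ k) K] [IsScalarTower k (MvPolynomial σ k) K]
    [IsFractionRing (MvPolynomial σ k) K]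
    (pd : σ → Derivation k K K)
    (hpd : ∀ i (q : MvPolynomial σ k),
      pd i (algebraMap (MvPolynomial σ k) K q) = algebraMap (MvPolynomial σ k) K (pderiv i q))
    (Dx : σ → Derivation k (MvPolynomial τ K) (MvPolynomial τ K))
    (hDxC : ∀ i a, Dx i (C a) = C (pd i a)) (hDxX : ∀ i j, Dx i (X j) = 0)
    (ψ : MvPolynomial τ K) (F : σ → MvPolynomial τ k)
    (hF : Submodule.span k (Set.range fun (p : τ → k) (i : σ) => eval p (F i)) = ⊤)
    (hPoisson : ∑ i, Dx i ψ * map (algebraMap k K) (F i) = 0) (m : τ →₀ ℕ) :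
    coeff m ψ ∈ Set.range (algebraMap (MvPolynomial σ k) K) := by
  obtain ⟨g, hg, Ψ, hrel, hgψ⟩ := exists_isRelPrime_C_mul_eq_map (MvPolynomial σ k) ψ
  have hdvd : C g ∣ Ψ * ∑ i, C (pderiv i g) * map (algebraMap k (MvPolynomial σ k)) (F i) := by
    refine C_dvd_mul_sum_of_sum_derivation_eq_zero (IsFractionRing.injective _ K)
      (fun i a => by rw [hDxC, hpd]) hDxX hgψ ?_
    simpa only [map_map, ← IsScalarTower.algebraMap_eq] using hPoisson
  have hunit : IsUnit g := isUnit_of_forall_dvd_pderiv hg <|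
    dvd_of_C_dvd_sum_of_span_eval_eq_top hF (hrel.dvd_of_dvd_mul_left hdvd)
  obtain ⟨u, hu⟩ := hunit.exists_left_inv
  refine ⟨u * coeff m Ψ, ?_⟩
  rw [map_mul, ← coeff_map, ← hgψ, coeff_C_mul, ← mul_assoc, ← map_mul, hu, map_one, one_mul]

/-- **Uniqueness lemma (R. Raj).**  Let `K = ℂ(x₁,…,xₙ)` be the field of rational functions
(formalized as an arbitrary fraction field of `ℂ[x₁,…,xₙ]`), let `∂ᵢ` be the partial
derivatives on `K` (the unique derivations extending `pderiv i` on polynomials), and let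
`Dxᵢ` be the coefficientwise extensions of `∂ᵢ` to `K[p₁,…,pₙ]` (the unique derivations with
`Dxᵢ (C a) = C (∂ᵢ a)` and `Dxᵢ pⱼ = 0`).  Let `ψ ∈ K[p₁,…,pₙ]` (a rational function of `x`
polynomial in `p`), and let `f ∈ ℂ[p₁,…,pₙ]` be a polynomial whose gradients `∇f(p)`,
`p ∈ ℂⁿ`, span `ℂⁿ`.  If the Poisson bracket `Σᵢ (∂ψ/∂xᵢ)(∂f/∂pᵢ)` vanishes, then every
coefficient of `ψ` is a polynomial, i.e. lies in the image of `ℂ[x₁,…,xₙ]` in `K`. -/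
theorem raj_lemma (n : ℕ) (hn : 1 ≤ n)
    (K : Type) [Field K] [Algebra ℂ K]
    [Algebra (MvPolynomial (Fin n) ℂ) K] [IsScalarTower ℂ (MvPolynomial (Fin n) ℂ) K]
    [IsFractionRing (MvPolynomial (Fin n) ℂ) K]
    (pd : Fin n → Derivation ℂ K K)
    (hpd : ∀ (i : Fin n) (q : MvPolynomial (Fin n) ℂ),
      pd i (algebraMap (MvPolynomial (Fin n) ℂ) K q)
        = algebraMap (MvPolynomial (Fin n) ℂ) K (MvPolynomial.pderiv i q))
    (Dx : Fin n → Derivation ℂ (MvPolynomial (Fin n) K) (MvPolynomial (Fin n) K))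
    (hDxC : ∀ (i : Fin n) (a : K), Dx i (MvPolynomial.C a) = MvPolynomial.C (pd i a))
    (hDxX : ∀ i j : Fin n, Dx i (MvPolynomial.X j) = 0)
    (ψ : MvPolynomial (Fin n) K)
    (f : MvPolynomial (Fin n) ℂ)
    (hf : Submodule.span ℂ
        (Set.range fun pt : Fin n → ℂ =>
          (fun i => MvPolynomial.eval pt (MvPolynomial.pderiv i f) : Fin n → ℂ))
      = (⊤ : Submodule ℂ (Fin n → ℂ)))
    (hPoisson : ∑ i : Fin n,
        Dx i ψ * MvPolynomial.map (algebraMap ℂ K) (MvPolynomial.pderiv i f) = 0) :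
    ∀ m : Fin n →₀ ℕ,
      MvPolynomial.coeff m ψ ∈ Set.range (algebraMap (MvPolynomial (Fin n) ℂ) K) :=
  raj_lemma_general pd hpd Dx hDxC hDxX ψ (fun i => pderiv i f) hf hPoisson
end

section
/- (The Amitsur–Levitzki identity.) Let A be a commutative ring, N ≥ 1, and let X_1, …, X_{2N} be N×N matrices with entries in A. Then Σ_{σ ∈ S_{2N}} sgn(σ) · X_{σ(1)} X_{σ(2)} ⋯ X_{σ(2N)} = 0 in the matrix ring Mat_N(A). -/
/-!
Rosset's proof. The standard polynomial is multilinear, so it suffices to evaluate it on matrix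
units; these have integer entries, so we may work over `ℚ`. Let `Y = ∑ i, e_i X_i`, a matrix over
the exterior algebra on `e_1, …, e_k`. Its `k`-th power is `e_1 ∧ ⋯ ∧ e_k` times the standard
polynomial at `X_1, …, X_k`, so it is enough that `Y ^ (2 * N) = 0`. The entries of `Y` anticommute:
those of `Y ^ 2` therefore commute, and the trace of `Y ^ (2 * j) = Y ^ (2 * j - 1) * Y` is equal to
its own negative for `j ≥ 1`. So all powers of `Y ^ 2` are traceless, which in characteristic zero
forces its characteristic polynomial to be `X ^ N`, and the Cayley–Hamilton theorem applies.
-/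

section TracesOfPowers

open Polynomial

variable {R n : Type*} [Fintype n] [DecidableEq n]

lemma derivative_det [CommRing R] (A : Matrix n n R[X]) :
    derivative A.det = (A.adjugate * A.map derivative).trace := by
  have diag_adjugate_mul (i : n) : (A.adjugate * A.map derivative) i i =
      (A.updateCol i fun j => derivative (A j i)).det := by
    rw [← Matrix.cramer_apply, Matrix.cramer_eq_adjugate_mulVec]
    rfl
  simp only [Matrix.trace, Matrix.diag_apply, diag_adjugate_mul, Matrix.det_apply', derivative_sum,
    derivative_intCast_mul, derivative_prod_finset, Finset.mul_sum]
  rw [Finset.sum_comm]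
  refine Finset.sum_congr rfl fun i _ => Finset.sum_congr rfl fun σ _ => ?_
  rw [← Finset.mul_prod_erase Finset.univ _ (Finset.mem_univ i), Matrix.updateCol_self,
    mul_comm (Finset.prod _ _)]
  congr 2
  refine Finset.prod_congr rfl fun j hj => ?_
  rw [Matrix.updateCol_ne (Finset.ne_of_mem_erase hj)]

lemma derivative_charpoly [CommRing R] (M : Matrix n n R) :
    derivative M.charpoly = M.charmatrix.adjugate.trace := by
  have map_derivative : M.charmatrix.map derivative = 1 := by
    ext1 i j
    by_cases h : i = j <;> simp [Matrix.one_apply, h]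
  rw [Matrix.charpoly, derivative_det, map_derivative, mul_one]

lemma X_smul_adjugate_charmatrix [CommRing R] (M : Matrix n n R) :
    (X : R[X]) • M.charmatrix.adjugate =
      M.map C * M.charmatrix.adjugate + M.charpoly • 1 := by
  rw [Matrix.charpoly, ← Matrix.mul_adjugate, ← add_mul, Matrix.charmatrix, RingHom.mapMatrix_apply,
    add_sub_cancel, Matrix.scalar_apply, ← Matrix.smul_eq_diagonal_mul]

lemma trace_map_C_pow_mul_adjugate_charmatrix [CommRing R] {M : Matrix n n R}
    (hM : ∀ k, (M ^ (k + 1)).trace = 0) (k : ℕ) :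
    ((M ^ (k + 1)).map C * M.charmatrix.adjugate).trace =
      X ^ k * (M.map C * M.charmatrix.adjugate).trace := by
  induction k with
  | zero => simp
  | succ k ih =>
    have trace_map_pow : ((M ^ (k + 1)).map C).trace = 0 := by
      rw [← AddMonoidHom.map_trace, hM, map_zero]
    calc ((M ^ (k + 2)).map C * M.charmatrix.adjugate).trace
        = ((M ^ (k + 1)).map C * (M.map C * M.charmatrix.adjugate)).trace := by
          rw [pow_succ, Matrix.map_mul, mul_assoc]
      _ = ((M ^ (k + 1)).map C * ((X : R[X]) • M.charmatrix.adjugate)).trace := by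
          rw [X_smul_adjugate_charmatrix, mul_add, Matrix.trace_add, mul_smul_comm, mul_one,
            Matrix.trace_smul, trace_map_pow, smul_zero, add_zero]
      _ = X ^ (k + 1) * (M.map C * M.charmatrix.adjugate).trace := by
          rw [mul_smul_comm, Matrix.trace_smul, ih, smul_eq_mul, pow_succ', mul_assoc]

lemma trace_map_C_mul_adjugate_charmatrix [CommRing R] {M : Matrix n n R}
    (hM : ∀ k, (M ^ (k + 1)).trace = 0) :
    (M.map C * M.charmatrix.adjugate).trace = 0 := by
  have trace_aeval (q : R[X]) : ((M * aeval M q).map C * M.charmatrix.adjugate).trace =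
      q * (M.map C * M.charmatrix.adjugate).trace := by
    induction q using Polynomial.induction_on' with
    | add p q hp hq =>
      rw [map_add, mul_add, Matrix.map_add _ (map_add C), add_mul, Matrix.trace_add, hp, hq,
        add_mul]
    | monomial k a =>
      have map_smul_pow : (a • M ^ (k + 1)).map C = C a • (M ^ (k + 1)).map C := by
        ext1 i j
        simp
      rw [aeval_monomial, ← Algebra.smul_def, mul_smul_comm, ← pow_succ', map_smul_pow,
        smul_mul_assoc, Matrix.trace_smul, trace_map_C_pow_mul_adjugate_charmatrix hM, smul_eq_mul,
        ← mul_assoc, C_mul_X_pow_eq_monomial]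
  have charpoly_mul_trace : M.charpoly * (M.map C * M.charmatrix.adjugate).trace = 0 := by
    rw [← trace_aeval, Matrix.aeval_self_charpoly, mul_zero, Matrix.map_zero _ (map_zero C),
      zero_mul, Matrix.trace_zero]
  exact (M.charpoly_monic.mul_right_eq_zero_iff).1 charpoly_mul_trace

lemma eq_X_pow_of_X_mul_derivative [Ring R] [IsAddTorsionFree R] {p : R[X]} (hp : p.Monic)
    (h : X * derivative p = p.natDegree • p) : p = X ^ p.natDegree := by
  ext k
  rw [coeff_X_pow]
  split_ifs with hk
  · rw [hk, hp.coeff_natDegree]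
  · have smul_coeff : k • p.coeff k = p.natDegree • p.coeff k := by
      rw [← coeff_smul p.natDegree, ← h]
      cases k with
      | zero => simp
      | succ k => rw [coeff_X_mul, coeff_derivative, ← Nat.cast_succ, nsmul_eq_mul, Nat.cast_comm]
    have sub_smul_coeff : (k - p.natDegree : ℤ) • p.coeff k = 0 := by
      rw [sub_smul, natCast_zsmul, natCast_zsmul, smul_coeff, sub_self]
    exact (smul_eq_zero.1 sub_smul_coeff).resolve_left (by lia)

lemma charpoly_eq_X_pow_of_trace_pow_eq_zero [CommRing R] [IsAddTorsionFree R] {M : Matrix n n R}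
    (hM : ∀ k, (M ^ (k + 1)).trace = 0) : M.charpoly = X ^ Fintype.card n := by
  nontriviality R
  rw [← M.charpoly_natDegree_eq_dim]
  refine eq_X_pow_of_X_mul_derivative M.charpoly_monic ?_
  rw [derivative_charpoly, ← smul_eq_mul, ← Matrix.trace_smul, X_smul_adjugate_charmatrix,
    Matrix.trace_add, trace_map_C_mul_adjugate_charmatrix hM, zero_add, Matrix.trace_smul,
    Matrix.trace_one, M.charpoly_natDegree_eq_dim, smul_eq_mul, nsmul_eq_mul, mul_comm]

lemma pow_card_eq_zero_of_trace_pow_eq_zero [CommRing R] [IsAddTorsionFree R] {M : Matrix n n R}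
    (hM : ∀ k, (M ^ (k + 1)).trace = 0) : M ^ Fintype.card n = 0 := by
  simpa [charpoly_eq_X_pow_of_trace_pow_eq_zero hM] using M.aeval_self_charpoly

end TracesOfPowers

section Anticommuting

lemma trace_mul_eq_neg_of_anticommute {m n E : Type*} [Fintype m] [Fintype n]
    [NonUnitalNonAssocRing E] {A : Matrix m n E} {B : Matrix n m E}
    (h : ∀ i j, A i j * B j i = -(B j i * A i j)) : (A * B).trace = -(B * A).trace := by
  simp only [Matrix.trace, Matrix.diag_apply, Matrix.mul_apply, h, Finset.sum_neg_distrib]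
  rw [Finset.sum_comm]

variable {n E : Type*} [Fintype n] [DecidableEq n] [Ring E] {Y : Matrix n n E}

lemma pow_apply_mul_of_anticommute {y : E} (hy : ∀ i j, Y i j * y = -(y * Y i j)) (m : ℕ)
    (i j : n) : (Y ^ m) i j * y = (-1) ^ m * (y * (Y ^ m) i j) := by
  induction m generalizing i j with
  | zero => by_cases h : i = j <;> simp [h]
  | succ m ih =>
    simp only [pow_succ, Matrix.mul_apply, Finset.sum_mul, Finset.mul_sum]
    refine Finset.sum_congr rfl fun c _ => ?_
    simp only [mul_assoc, hy, mul_neg, neg_mul, one_mul]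
    rw [← mul_assoc _ y, ih]
    simp only [mul_assoc]

variable (hY : ∀ i j k l, Y i j * Y k l = -(Y k l * Y i j))
include hY

lemma trace_pow_two_mul_succ_eq_zero_of_anticommute [IsAddTorsionFree E] (k : ℕ) :
    (Y ^ (2 * (k + 1))).trace = 0 := by
  have odd_pow_anticommute (i j : n) :
      (Y ^ (2 * k + 1)) i j * Y j i = -(Y j i * (Y ^ (2 * k + 1)) i j) := by
    rw [pow_apply_mul_of_anticommute (fun a b => hY a b j i), (odd_two_mul_add_one k).neg_one_pow,
      neg_one_mul]
  refine self_eq_neg.1 ?_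
  calc (Y ^ (2 * k + 1) * Y).trace
      = -(Y * Y ^ (2 * k + 1)).trace := trace_mul_eq_neg_of_anticommute odd_pow_anticommute
    _ = -(Y ^ (2 * k + 1) * Y).trace := by rw [← pow_succ', pow_succ]

lemma commute_sq_apply_of_anticommute (i j k l : n) : Commute ((Y ^ 2) i j) ((Y ^ 2) k l) := by
  have commute_entry (a b : n) : Commute ((Y ^ 2) i j) (Y a b) := by
    simpa [commute_iff_eq] using pow_apply_mul_of_anticommute (fun c d => hY c d a b) 2 i j
  rw [pow_two Y, Matrix.mul_apply (M := Y) (i := k), ← pow_two]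
  exact Commute.sum_right _ _ _ fun c _ => (commute_entry k c).mul_right (commute_entry c l)

open scoped IsMulCommutative in
lemma pow_two_mul_card_eq_zero_of_anticommute [IsAddTorsionFree E] :
    Y ^ (2 * Fintype.card n) = 0 := by
  let S := Algebra.adjoin ℤ (Set.range fun p : n × n => (Y ^ 2) p.1 p.2)
  have : IsMulCommutative S := Algebra.isMulCommutative_adjoin ℤ <| by
    rintro _ ⟨p, rfl⟩ _ ⟨q, rfl⟩
    exact commute_sq_apply_of_anticommute hY p.1 p.2 q.1 q.2
  have : IsAddTorsionFree S :=
    Function.Injective.isAddTorsionFree (S.val : S →+ E) Subtype.val_injective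
  let M : Matrix n n S := fun i j => ⟨(Y ^ 2) i j, Algebra.subset_adjoin ⟨(i, j), rfl⟩⟩
  have map_pow_M (k : ℕ) : S.val.mapMatrix (M ^ k) = Y ^ (2 * k) := by
    rw [map_pow, pow_mul]
    rfl
  have trace_pow_M (k : ℕ) : (M ^ (k + 1)).trace = 0 := by
    have trace_val : S.val (M ^ (k + 1)).trace = (Y ^ (2 * (k + 1))).trace := by
      rw [AddMonoidHom.map_trace, ← map_pow_M]
      rfl
    apply Subtype.val_injective
    exact trace_val.trans (trace_pow_two_mul_succ_eq_zero_of_anticommute hY k)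
  rw [← map_pow_M, pow_card_eq_zero_of_trace_pow_eq_zero trace_pow_M, map_zero]

end Anticommuting

section StandardPolynomial

/-- The standard polynomial of degree `k` on an algebra `B`, `∑ σ, sgn σ • b_{σ 1} ⋯ b_{σ k}`,
encoded as the alternating map obtained by alternatizing the `k`-fold product. -/
def standardPolynomial (R B : Type*) [CommSemiring R] [Ring B] [Algebra R B] (k : ℕ) :
    B [⋀^Fin k]→ₗ[R] B :=
  (MultilinearMap.mkPiAlgebraFin R k B).alternatization

lemma standardPolynomial_apply (R : Type*) {B : Type*} [CommSemiring R] [Ring B] [Algebra R B]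
    {k : ℕ} (b : Fin k → B) :
    standardPolynomial R B k b =
      ∑ σ : Equiv.Perm (Fin k), (Equiv.Perm.sign σ : ℤ) • (List.ofFn fun i => b (σ i)).prod := by
  simp [standardPolynomial, MultilinearMap.alternatization_apply, Units.smul_def]

lemma map_standardPolynomial (R S : Type*) {B C : Type*} [CommSemiring R] [CommSemiring S]
    [Ring B] [Ring C] [Algebra R B] [Algebra S C] {k : ℕ} (f : B →+* C) (b : Fin k → B) :
    f (standardPolynomial R B k b) = standardPolynomial S C k (f ∘ b) := by
  simp [standardPolynomial_apply, List.map_ofFn, Function.comp_def, map_list_prod]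

end StandardPolynomial

section ExteriorAlgebra

open ExteriorAlgebra TensorProduct

lemma prod_ofFn_tmul {R A B : Type*} [CommSemiring R] [Semiring A] [Semiring B] [Algebra R A]
    [Algebra R B] {k : ℕ} (a : Fin k → A) (b : Fin k → B) :
    (List.ofFn fun i => a i ⊗ₜ[R] b i).prod = (List.ofFn a).prod ⊗ₜ[R] (List.ofFn b).prod := by
  induction k with
  | zero => simp [Algebra.TensorProduct.one_def]
  | succ k ih => simp [List.ofFn_succ, ih]

variable {R V : Type*} [CommRing R] [AddCommGroup V] [Module R V] {k : ℕ}

lemma sum_ι_tmul_pow {B : Type*} [Ring B] [Algebra R B] (v : Fin k → V) (b : Fin k → B) :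
    (∑ i, ι R (v i) ⊗ₜ[R] b i) ^ k = ιMulti R k v ⊗ₜ[R] standardPolynomial R B k b := by
  have expand : (∑ i, ι R (v i) ⊗ₜ[R] b i) ^ k =
      ∑ f : Fin k → Fin k, ιMulti R k (v ∘ f) ⊗ₜ[R] (List.ofFn (b ∘ f)).prod := by
    simpa [prod_ofFn_tmul, ιMulti_apply, Function.comp_def] using
      (MultilinearMap.mkPiAlgebraFin R k (ExteriorAlgebra R V ⊗[R] B)).map_sum
        fun _ i => ι R (v i) ⊗ₜ[R] b i
  rw [expand, standardPolynomial_apply, TensorProduct.tmul_sum]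
  refine (Fintype.sum_of_injective (fun σ : Equiv.Perm (Fin k) => ⇑σ) DFunLike.coe_injective
    _ _ (fun f hf => ?_) fun σ => ?_).symm
  · have not_injective : ¬ Function.Injective (v ∘ f) := fun h =>
      hf ⟨.ofBijective f (Finite.injective_iff_bijective.1 h.of_comp), rfl⟩
    rw [ιMulti_eq_zero_of_not_inj not_injective, zero_tmul]
  · rw [AlternatingMap.map_perm, Units.smul_def, TensorProduct.tmul_smul, TensorProduct.smul_tmul']
    rfl

lemma exists_linearMap_ιMulti_eq_one (e : Module.Basis (Fin k) R V) :
    ∃ φ : ExteriorAlgebra R V →ₗ[R] R, φ (ιMulti R k e) = 1 :=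
  ⟨liftAlternating (Pi.single k e.det), by
    rw [liftAlternating_apply_ιMulti, Pi.single_eq_same, e.det_self]⟩

lemma eq_zero_of_ιMulti_tmul_eq_zero {B : Type*} [AddCommMonoid B] [Module R B]
    (e : Module.Basis (Fin k) R V) {b : B} (h : ιMulti R k e ⊗ₜ[R] b = 0) :
    b = 0 := by
  obtain ⟨φ, hφ⟩ := exists_linearMap_ιMulti_eq_one e
  simpa [hφ] using congrArg (TensorProduct.lid R B ∘ φ.rTensor B) h

end ExteriorAlgebra

section AmitsurLevitzki

open ExteriorAlgebra TensorProduct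

variable {n : Type*} [Fintype n] [DecidableEq n]

lemma sum_ι_tmul_pow_two_mul_card_eq_zero {R V κ : Type*} [CommRing R] [AddCommGroup V]
    [Module R V] [IsAddTorsionFree (ExteriorAlgebra R V)] [Fintype κ] (v : κ → V)
    (X : κ → Matrix n n R) :
    (∑ i, ι R (v i) ⊗ₜ[R] X i) ^ (2 * Fintype.card n) = 0 := by
  let Φ := (matrixEquivTensor n R (ExteriorAlgebra R V)).symm
  have apply_eq_ι (i j : n) :
      Φ (∑ l, ι R (v l) ⊗ₜ[R] X l) i j = ι R (∑ l, X l i j • v l) := by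
    simp [Φ, Matrix.sum_apply, Algebra.smul_def, Algebra.commutes]
  apply Φ.injective
  rw [map_pow, map_zero]
  refine pow_two_mul_card_eq_zero_of_anticommute fun i j k l => ?_
  rw [apply_eq_ι, apply_eq_ι]
  exact eq_neg_of_add_eq_zero_left (ι_add_mul_swap _ _)

lemma standardPolynomial_matrix_eq_zero_of_algebra_rat {R : Type*} [CommRing R] [Algebra ℚ R]
    {k : ℕ} (hk : 2 * Fintype.card n ≤ k) (X : Fin k → Matrix n n R) :
    standardPolynomial R (Matrix n n R) k X = 0 := by
  have : IsAddTorsionFree (ExteriorAlgebra R (Fin k → R)) := .of_module_rat _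
  apply eq_zero_of_ιMulti_tmul_eq_zero (Pi.basisFun R (Fin k))
  rw [← sum_ι_tmul_pow]
  exact pow_eq_zero_of_le hk (sum_ι_tmul_pow_two_mul_card_eq_zero _ X)

lemma standardPolynomial_single_eq_zero {A : Type*} [CommRing A] {k : ℕ}
    (hk : 2 * Fintype.card n ≤ k) (p : Fin k → n × n) :
    standardPolynomial A (Matrix n n A) k (fun i => Matrix.single (p i).1 (p i).2 1) = 0 := by
  let E : Fin k → Matrix n n ℤ := fun i => Matrix.single (p i).1 (p i).2 1
  have over_int : standardPolynomial ℤ (Matrix n n ℤ) k E = 0 := by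
    have cast_injective : Function.Injective ((Int.castRingHom ℚ).mapMatrix (m := n)) :=
      Matrix.map_injective Int.cast_injective
    apply cast_injective
    rw [map_zero, map_standardPolynomial ℤ ℚ,
      standardPolynomial_matrix_eq_zero_of_algebra_rat hk]
  have cast_E : (Int.castRingHom A).mapMatrix ∘ E = fun i => Matrix.single (p i).1 (p i).2 1 := by
    ext1 i
    simp only [E, Function.comp_apply, RingHom.mapMatrix_apply, Matrix.map_single, map_one]
  rw [← cast_E, ← map_standardPolynomial ℤ A, over_int, map_zero]

lemma standardPolynomial_matrix_eq_zero {A : Type*} [CommRing A] {k : ℕ}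
    (hk : 2 * Fintype.card n ≤ k) : standardPolynomial A (Matrix n n A) k = 0 :=
  (Matrix.stdBasis A n n).ext_alternating fun p _ => by
    simpa [← Matrix.stdBasis_eq_single] using standardPolynomial_single_eq_zero (A := A) hk p

end AmitsurLevitzki

theorem amitsur_levitzki_general {A n : Type*} [CommRing A] [Fintype n] [DecidableEq n] {k : ℕ}
    (hk : 2 * Fintype.card n ≤ k) (X : Fin k → Matrix n n A) :
    ∑ σ : Equiv.Perm (Fin k),
      ((Equiv.Perm.sign σ : ℤ) • (List.ofFn fun i => X (σ i)).prod) = 0 := by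
  rw [← standardPolynomial_apply A, standardPolynomial_matrix_eq_zero hk, AlternatingMap.zero_apply]

/-- **The Amitsur–Levitzki identity.** For any commutative ring `A`, any `N ≥ 1`, and any
`2N` matrices `X 1, …, X (2N)` of size `N × N` with entries in `A`, the standard polynomial
of degree `2N` vanishes on them:
`Σ_{σ ∈ S_{2N}} sgn(σ) · X (σ 1) ⋯ X (σ (2N)) = 0`. -/
theorem amitsur_levitzki (A : Type*) [CommRing A] (N : ℕ) (hN : 1 ≤ N)
    (X : Fin (2 * N) → Matrix (Fin N) (Fin N) A) :
    ∑ σ : Equiv.Perm (Fin (2 * N)),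
      ((Equiv.Perm.sign σ : ℤ) • (List.ofFn fun i => X (σ i)).prod) = 0 :=
  amitsur_levitzki_general (by rw [Fintype.card_fin]) X
end
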